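/- arXiv:2504.19054 — 11 statements merged into one kernel-verified Lean document; each statement's English description precedes it below -/
import Mathlib

section
/- Let n ≥ 1 and let M ∈ ℝ^{n×n} be an RDDL matrix. Then M is invertible if and only if M is connected to the dummy vertex, i.e., for every index i ∈ [n] there exists a finite sequence i = v₀, v₁, …, v_k of indices in [n] with M_{v_l, v_{l+1}} < 0 for all 0 ≤ l < k and with strictly positive row sum ∑_{j=1}^n M_{v_k, j} > 0 at the final index (the case k = 0 being allowed). -/
open Matrix

/-- A matrix `M` is an RDDL matrix (row diagonally dominant L-matrix) if its diagonal
entries are positive, its off-diagonal entries are nonpositive, and each row is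
diagonally dominant. -/
def IsRDDL {n : ℕ} (M : Matrix (Fin n) (Fin n) ℝ) : Prop :=
  (∀ i, 0 < M i i) ∧ (∀ i j, i ≠ j → M i j ≤ 0) ∧
    (∀ i, ∑ j ∈ Finset.univ.erase i, |M i j| ≤ M i i)

/-- `M` is connected to the dummy vertex: from every index `i` there is a finite
sequence `i = v₀, v₁, …, v_k` with `M (v l) (v (l+1)) < 0` for all `l < k` and with
strictly positive row sum at the final index. -/
def ConnectedToDummy {n : ℕ} (M : Matrix (Fin n) (Fin n) ℝ) : Prop :=
  ∀ i : Fin n, ∃ (k : ℕ) (v : Fin (k + 1) → Fin n), v 0 = i ∧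
    (∀ l : Fin k, M (v l.castSucc) (v l.succ) < 0) ∧
    0 < ∑ j, M (v (Fin.last k)) j

theorem rddl_rowsum_nonneg {n : ℕ} {M : Matrix (Fin n) (Fin n) ℝ} (hM : IsRDDL M) (i : Fin n) :
    0 ≤ ∑ j, M i j := by
  obtain ⟨_, h2, h3⟩ := hM
  rw [← Finset.add_sum_erase _ _ (Finset.mem_univ i)]
  have h : ∑ j ∈ Finset.univ.erase i, |M i j| = - ∑ j ∈ Finset.univ.erase i, M i j := by
    rw [← Finset.sum_neg_distrib]
    apply Finset.sum_congr rfl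
    intro j hj
    exact abs_of_nonpos (h2 i j (Finset.ne_of_mem_erase hj).symm)
  have := h3 i
  linarith

theorem rddl_mulVec_eq {n : ℕ} (M : Matrix (Fin n) (Fin n) ℝ) (x : Fin n → ℝ) (i : Fin n) :
    (M *ᵥ x) i = (∑ j, M i j) * x i + ∑ j, M i j * (x j - x i) := by
  simp only [Matrix.mulVec, dotProduct]
  rw [Finset.sum_mul, ← Finset.sum_add_distrib]
  apply Finset.sum_congr rfl
  intro j _
  ring

theorem rddl_nonpos {n : ℕ} {M : Matrix (Fin n) (Fin n) ℝ} (hM : IsRDDL M)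
    (hC : ConnectedToDummy M) (x : Fin n → ℝ) (hx : M *ᵥ x = 0) (a : Fin n) : x a ≤ 0 := by
  obtain ⟨i, -, hi⟩ := Finset.exists_max_image Finset.univ x ⟨a, Finset.mem_univ a⟩
  refine (hi a (Finset.mem_univ a)).trans ?_
  by_contra! hpos
  -- at every maximizer, the row sum vanishes and neighbours are maximizers
  have key : ∀ p, x p = x i → (∑ j, M p j = 0) ∧ ∀ j, M p j < 0 → x j = x i := by
    intro p hp
    have h0 : (M *ᵥ x) p = 0 := by rw [hx]; rfl
    rw [rddl_mulVec_eq] at h0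
    have hr := rddl_rowsum_nonneg hM p
    have hterm : ∀ j ∈ Finset.univ, 0 ≤ M p j * (x j - x p) := by
      intro j hj
      by_cases hpj : p = j
      · subst hpj; simp
      · exact mul_nonneg_of_nonpos_of_nonpos (hM.2.1 p j hpj) (by linarith [hi j hj])
    have hs := Finset.sum_nonneg hterm
    have hrx : 0 ≤ (∑ j, M p j) * x p := mul_nonneg hr (by linarith)
    refine ⟨?_, ?_⟩
    · have : (∑ j, M p j) * x p = 0 := by linarith
      rcases mul_eq_zero.1 this with h | h
      · exact h
      · linarith
    · intro j hj
      have h1 : ∑ j, M p j * (x j - x p) = 0 := by linarith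
      have h2 := (Finset.sum_eq_zero_iff_of_nonneg hterm).1 h1 j (Finset.mem_univ j)
      rcases mul_eq_zero.1 h2 with h | h
      · linarith
      · linarith
  obtain ⟨k, v, hv0, hv, hlast⟩ := hC i
  have hall : ∀ l : Fin (k + 1), x (v l) = x i := by
    intro l
    induction l using Fin.induction with
    | zero => rw [hv0]
    | succ l ih => exact (key _ ih).2 _ (hv l)
  have := (key _ (hall (Fin.last k))).1
  linarith

/-- An RDDL matrix is invertible if and only if it is connected to the dummy vertex. -/
theorem rddl_invertible_iff_connectedToDummy {n : ℕ} (hn : 1 ≤ n)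
    (M : Matrix (Fin n) (Fin n) ℝ) (hM : IsRDDL M) :
    IsUnit M ↔ ConnectedToDummy M := by
  constructor
  · intro hU
    let P : Fin n → Prop := fun i => ∃ (k : ℕ) (v : Fin (k + 1) → Fin n), v 0 = i ∧
      (∀ l : Fin k, M (v l.castSucc) (v l.succ) < 0) ∧ 0 < ∑ j, M (v (Fin.last k)) j
    have hP0 : ∀ i, 0 < ∑ j, M i j → P i := fun i hi =>
      ⟨0, fun _ => i, rfl, fun l => l.elim0, hi⟩
    have hP1 : ∀ i j, M i j < 0 → P j → P i := by
      rintro i j hij ⟨k, v, hv0, hv, hl⟩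
      refine ⟨k + 1, Fin.cons i v, rfl, ?_, ?_⟩
      · intro l
        induction l using Fin.cases with
        | zero => simpa [hv0] using hij
        | succ l =>
          rw [← Fin.succ_castSucc, Fin.cons_succ, Fin.cons_succ]
          exact hv l
      · rw [← Fin.succ_last, Fin.cons_succ]
        exact hl
    classical
    by_contra hC
    obtain ⟨a, ha⟩ : ∃ a, ¬ P a := not_forall.1 hC
    obtain ⟨y, hy⟩ := (Matrix.mulVec_surjective_iff_isUnit.2 hU) (fun _ => (1 : ℝ))
    obtain ⟨i, hiC, hi⟩ := Finset.exists_min_image (Finset.univ.filter fun i => ¬ P i) y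
      ⟨a, by simpa using ha⟩
    have hiP : ¬ P i := by simpa using hiC
    have h1 : (M *ᵥ y) i = 1 := by rw [hy]
    rw [rddl_mulVec_eq] at h1
    have hr : ∑ j, M i j = 0 :=
      le_antisymm (not_lt.1 fun h => hiP (hP0 i h)) (rddl_rowsum_nonneg hM i)
    have hs : ∑ j, M i j * (y j - y i) ≤ 0 := by
      apply Finset.sum_nonpos
      intro j _
      by_cases hij : i = j
      · subst hij; simp
      · by_cases hj : P j
        · have : M i j = 0 :=
            le_antisymm (hM.2.1 i j hij) (not_lt.1 fun h => hiP (hP1 i j h hj))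
          simp [this]
        · exact mul_nonpos_of_nonpos_of_nonneg (hM.2.1 i j hij)
            (sub_nonneg.2 (hi j (by simpa using hj)))
    rw [hr] at h1
    linarith
  · intro hC
    rw [← Matrix.mulVec_injective_iff_isUnit]
    intro x y hxy
    have hxy' : M *ᵥ x = M *ᵥ y := hxy
    ext a
    have h1 := rddl_nonpos hM hC (x - y) (by rw [Matrix.mulVec_sub, hxy', sub_self]) a
    have h2 := rddl_nonpos hM hC (y - x) (by rw [Matrix.mulVec_sub, hxy', sub_self]) a
    simp only [Pi.sub_apply] at h1 h2
    linarith
end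

section
/- Let M ∈ ℝ^{n×n} be an RDDL matrix that is connected to the dummy vertex, let D = diag(M) be the diagonal matrix with the diagonal of M, and let A = I − D^{-1}M. Then the spectral radius of A is strictly less than 1; consequently I − A is invertible and (I − A)^{-1} = ∑_{k=0}^∞ A^k, where the series converges entrywise. -/
open Matrix

open Filter Topology in
lemma aux_fixed_zero {n : ℕ} (A : Matrix (Fin n) (Fin n) ℝ) (h0 : ∀ i j, 0 ≤ A i j)
    (h1 : ∀ i, ∑ j, A i j ≤ 1)
    (hc : ∀ i : Fin n, ∃ (k : ℕ) (v : Fin (k + 1) → Fin n), v 0 = i ∧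
      (∀ l : Fin k, 0 < A (v l.castSucc) (v l.succ)) ∧ ∑ j, A (v (Fin.last k)) j < 1)
    (u : Fin n → ℝ) (hu0 : ∀ i, 0 ≤ u i) (hu : ∀ i, ∑ j, A i j * u j = u i) (i : Fin n) :
    u i = 0 := by
  haveI : Nonempty (Fin n) := ⟨i⟩
  obtain ⟨a, ha⟩ := Finite.exists_max u
  by_contra hi
  have hm : 0 < u a := lt_of_lt_of_le (lt_of_le_of_ne (hu0 i) (Ne.symm hi)) (ha i)
  obtain ⟨k, v, hv0, hv, hl⟩ := hc a
  have key : ∀ l : Fin (k + 1), u (v l) = u a := by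
    intro l
    induction l using Fin.induction with
    | zero => rw [hv0]
    | succ l ih =>
      by_contra hne
      have hlt : u (v l.succ) < u a := lt_of_le_of_ne (ha _) hne
      have h2 : ∑ j, A (v l.castSucc) j * u j < ∑ j, A (v l.castSucc) j * u a := by
        apply Finset.sum_lt_sum
        · intro j _
          exact mul_le_mul_of_nonneg_left (ha j) (h0 _ _)
        · exact ⟨v l.succ, Finset.mem_univ _, mul_lt_mul_of_pos_left hlt (hv l)⟩
      rw [hu, ih, ← Finset.sum_mul] at h2
      nlinarith [h1 (v l.castSucc)]
  have h3 : ∑ j, A (v (Fin.last k)) j * u j ≤ ∑ j, A (v (Fin.last k)) j * u a :=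
    Finset.sum_le_sum fun j _ => mul_le_mul_of_nonneg_left (ha j) (h0 _ _)
  rw [hu, key, ← Finset.sum_mul] at h3
  nlinarith

open Filter Topology in
lemma aux_pow_tendsto {n : ℕ} (A : Matrix (Fin n) (Fin n) ℝ) (h0 : ∀ i j, 0 ≤ A i j)
    (h1 : ∀ i, ∑ j, A i j ≤ 1)
    (hc : ∀ i : Fin n, ∃ (k : ℕ) (v : Fin (k + 1) → Fin n), v 0 = i ∧
      (∀ l : Fin k, 0 < A (v l.castSucc) (v l.succ)) ∧ ∑ j, A (v (Fin.last k)) j < 1)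
    (i j : Fin n) : Tendsto (fun k => (A ^ k) i j) atTop (𝓝 0) := by
  have hp : ∀ k i j, 0 ≤ (A ^ k) i j := by
    intro k
    induction k with
    | zero => intro i j; rw [pow_zero, Matrix.one_apply]; split_ifs <;> norm_num
    | succ k ih =>
      intro i j
      rw [pow_succ, Matrix.mul_apply]
      exact Finset.sum_nonneg fun l _ => mul_nonneg (ih _ _) (h0 _ _)
  let w : Fin n → ℕ → ℝ := fun i k => ∑ j, (A ^ k) i j
  have hw0 : ∀ i k, 0 ≤ w i k := fun i k => Finset.sum_nonneg fun j _ => hp k i j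
  have hws : ∀ i k, w i (k + 1) = ∑ l, A i l * w l k := by
    intro i k
    simp only [w, pow_succ', Matrix.mul_apply, Finset.mul_sum]
    exact Finset.sum_comm
  have hanti : ∀ i, Antitone (w i) := by
    intro i
    apply antitone_nat_of_succ_le
    intro k
    have : w i (k + 1) = ∑ l, (A ^ k) i l * ∑ j, A l j := by
      simp only [w, pow_succ, Matrix.mul_apply, Finset.mul_sum]
      exact Finset.sum_comm
    rw [this]
    apply Finset.sum_le_sum
    intro l _
    exact mul_le_of_le_one_right (hp k i l) (h1 l)
  have hlim : ∀ i, ∃ a, Tendsto (w i) atTop (𝓝 a) := fun i =>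
    ⟨_, tendsto_atTop_ciInf (hanti i) ⟨0, by rintro _ ⟨k, rfl⟩; exact hw0 i k⟩⟩
  choose u hu using hlim
  have hz := aux_fixed_zero A h0 h1 hc u
    (fun i => ge_of_tendsto' (hu i) (hw0 i))
    (fun i => by
      have t1 : Tendsto (fun k => w i (k + 1)) atTop (𝓝 (u i)) :=
        (hu i).comp (tendsto_add_atTop_nat 1)
      have t2 : Tendsto (fun k => ∑ l, A i l * w l k) atTop (𝓝 (∑ l, A i l * u l)) :=
        tendsto_finsetSum _ fun l _ => (hu l).const_mul _
      simp only [hws] at t1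
      exact tendsto_nhds_unique t2 t1)
  have hui := hu i
  rw [hz i] at hui
  exact squeeze_zero (fun k => hp k i j)
    (fun k => Finset.single_le_sum (f := fun j => (A ^ k) i j) (fun l _ => hp k i l)
      (Finset.mem_univ j)) hui

open Filter Topology in
lemma aux_spec {n : ℕ} (A : Matrix (Fin n) (Fin n) ℝ)
    (ht : ∀ i j, Tendsto (fun k => (A ^ k) i j) atTop (𝓝 0)) (μ : ℂ)
    (hμ : μ ∈ spectrum ℂ (A.map Complex.ofReal)) : ‖μ‖ < 1 := by
  by_contra hge
  push Not at hge
  rw [← Matrix.spectrum_toLin', ← Module.End.hasEigenvalue_iff_mem_spectrum] at hμ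
  obtain ⟨x, hx⟩ := hμ.exists_hasEigenvector
  have hx1 : (A.map Complex.ofReal) *ᵥ x = μ • x := by
    simpa using hx.apply_eq_smul
  have hk : ∀ k, ((A ^ k).map Complex.ofReal) *ᵥ x = μ ^ k • x := by
    intro k
    induction k with
    | zero => simp [Matrix.map_one]
    | succ k ih =>
      have : (A ^ (k + 1)).map Complex.ofReal
          = (A ^ k).map Complex.ofReal * A.map Complex.ofReal := by
        rw [pow_succ]
        exact Matrix.map_mul (f := Complex.ofRealHom)
      rw [this, ← Matrix.mulVec_mulVec, hx1, Matrix.mulVec_smul, ih, smul_smul, pow_succ']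
  apply hx.2
  funext i
  have t : Tendsto (fun k => (((A ^ k).map Complex.ofReal) *ᵥ x) i) atTop (𝓝 0) := by
    have : Tendsto (fun k => ∑ j, (((A ^ k) i j : ℝ) : ℂ) * x j) atTop
        (𝓝 (∑ j, ((0 : ℝ) : ℂ) * x j)) :=
      tendsto_finsetSum _ fun j _ =>
        ((Complex.continuous_ofReal.tendsto 0).comp (ht i j)).mul_const _
    simpa [Matrix.mulVec, dotProduct] using this
  have t2 := t.norm
  rw [norm_zero] at t2
  have : ‖x i‖ ≤ 0 := by
    refine ge_of_tendsto' t2 fun k => ?_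
    rw [hk, Pi.smul_apply, smul_eq_mul, norm_mul, norm_pow]
    exact le_mul_of_one_le_left (norm_nonneg _) (one_le_pow₀ hge)
  simpa using this

open Filter Topology in
lemma aux_unit {n : ℕ} (A : Matrix (Fin n) (Fin n) ℝ)
    (ht : ∀ i j, Tendsto (fun k => (A ^ k) i j) atTop (𝓝 0)) : IsUnit (1 - A) := by
  rw [Matrix.isUnit_iff_isUnit_det, isUnit_iff_ne_zero]
  intro hdet
  obtain ⟨x, hx0, hx⟩ := Matrix.exists_mulVec_eq_zero_iff.mpr hdet
  have hx1 : A *ᵥ x = x := by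
    rw [Matrix.sub_mulVec, Matrix.one_mulVec, sub_eq_zero] at hx
    exact hx.symm
  have hk : ∀ k, (A ^ k) *ᵥ x = x := by
    intro k
    induction k with
    | zero => simp
    | succ k ih => rw [pow_succ, ← Matrix.mulVec_mulVec, hx1, ih]
  apply hx0
  funext i
  have t : Tendsto (fun k => ((A ^ k) *ᵥ x) i) atTop (𝓝 0) := by
    have : Tendsto (fun k => ∑ j, (A ^ k) i j * x j) atTop (𝓝 (∑ j, 0 * x j)) :=
      tendsto_finsetSum _ fun j _ => (ht i j).mul_const _
    simpa [Matrix.mulVec, dotProduct] using this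
  simp only [hk] at t
  exact tendsto_nhds_unique tendsto_const_nhds t

open Filter Topology in
lemma aux_sum {n : ℕ} (A : Matrix (Fin n) (Fin n) ℝ)
    (ht : ∀ i j, Tendsto (fun k => (A ^ k) i j) atTop (𝓝 0)) (i j : Fin n) :
    Tendsto (fun N => ∑ k ∈ Finset.range N, (A ^ k) i j) atTop (𝓝 ((1 - A)⁻¹ i j)) := by
  have hu := aux_unit A ht
  rw [Matrix.isUnit_iff_isUnit_det] at hu
  have hS : ∀ N, ∑ k ∈ Finset.range N, (A ^ k) i j
      = (1 - A)⁻¹ i j - ∑ l, (A ^ N) i l * (1 - A)⁻¹ l j := by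
    intro N
    have h : (∑ k ∈ Finset.range N, A ^ k) = (1 - A ^ N) * (1 - A)⁻¹ := by
      rw [← geom_sum_mul_neg, Matrix.mul_assoc, Matrix.mul_nonsing_inv _ hu, Matrix.mul_one]
    have h2 := congrFun (congrFun h i) j
    rw [Matrix.sum_apply, Matrix.sub_mul, Matrix.one_mul, Matrix.sub_apply,
      Matrix.mul_apply] at h2
    exact h2
  simp only [hS]
  have : Tendsto (fun N => ∑ l, (A ^ N) i l * (1 - A)⁻¹ l j) atTop
      (𝓝 (∑ l, 0 * (1 - A)⁻¹ l j)) :=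
    tendsto_finsetSum _ fun l _ => (ht i l).mul_const _
  simpa using this.const_sub ((1 - A)⁻¹ i j)

/-- For an RDDL matrix `M` connected to the dummy vertex, letting `D = diag M` and
`A = 1 - D⁻¹ * M`, the spectral radius of `A` is less than one (every complex eigenvalue
of `A` has modulus `< 1`); consequently `I - A` is invertible and
`(I - A)⁻¹ = ∑ₖ A^k` entrywise. -/
theorem spectralRadius_lt_one_of_connectedToDummy {n : ℕ}
    (M : Matrix (Fin n) (Fin n) ℝ) (hM : IsRDDL M) (hconn : ConnectedToDummy M)
    (A : Matrix (Fin n) (Fin n) ℝ)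
    (hA : A = 1 - (Matrix.diagonal fun i => (M i i)⁻¹) * M) :
    (∀ μ : ℂ, μ ∈ spectrum ℂ (A.map Complex.ofReal) → ‖μ‖ < 1) ∧
    IsUnit (1 - A) ∧
    (∀ i j, Filter.Tendsto (fun N => ∑ k ∈ Finset.range N, (A ^ k) i j)
      Filter.atTop (nhds ((1 - A)⁻¹ i j))) := by
  obtain ⟨hd, ho, hr⟩ := hM
  have hAe : ∀ i j, A i j = (1 : Matrix (Fin n) (Fin n) ℝ) i j - (M i i)⁻¹ * M i j := by
    intro i j
    rw [hA, Matrix.sub_apply, Matrix.diagonal_mul]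
  have hoff : ∀ i j, i ≠ j → A i j = (M i i)⁻¹ * (- M i j) := by
    intro i j hij
    rw [hAe, Matrix.one_apply_ne hij]; ring
  have h0 : ∀ i j, 0 ≤ A i j := by
    intro i j
    by_cases hij : i = j
    · subst hij
      rw [hAe, Matrix.one_apply_eq, inv_mul_cancel₀ (hd i).ne', sub_self]
    · rw [hoff i j hij]
      exact mul_nonneg (inv_nonneg.mpr (hd i).le) (neg_nonneg.mpr (ho i j hij))
  have hrow : ∀ i, ∑ j, A i j = 1 - (M i i)⁻¹ * ∑ j, M i j := by
    intro i
    simp only [hAe, Finset.sum_sub_distrib, ← Finset.mul_sum]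
    simp [Matrix.one_apply]
  have hMs : ∀ i, 0 ≤ ∑ j, M i j := by
    intro i
    rw [← Finset.add_sum_erase _ _ (Finset.mem_univ i)]
    have h2 : ∑ j ∈ Finset.univ.erase i, -|M i j| ≤ ∑ j ∈ Finset.univ.erase i, M i j :=
      Finset.sum_le_sum fun j _ => neg_abs_le _
    rw [Finset.sum_neg_distrib] at h2
    linarith [hr i]
  have h1 : ∀ i, ∑ j, A i j ≤ 1 := by
    intro i
    rw [hrow]
    linarith [mul_nonneg (inv_nonneg.mpr (hd i).le) (hMs i)]
  have ht := aux_pow_tendsto A h0 h1 (fun i => by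
    obtain ⟨k, v, hv0, hv, hl⟩ := hconn i
    refine ⟨k, v, hv0, fun l => ?_, ?_⟩
    · have hne : v l.castSucc ≠ v l.succ := by
        intro h
        have h3 := hv l
        rw [← h] at h3
        exact absurd (hd (v l.castSucc)) (not_lt.mpr h3.le)
      rw [hoff _ _ hne]
      exact mul_pos (inv_pos.mpr (hd _)) (neg_pos.mpr (hv l))
    · rw [hrow]
      linarith [mul_pos (inv_pos.mpr (hd (v (Fin.last k)))) hl])
  exact ⟨aux_spec A ht, aux_unit A ht, aux_sum A ht⟩
end

section
/- Let L be an n×n invertible SDDM matrix all of whose entries are integers in [−U, U] for some U ≥ 1. Then the ℓ₂ operator norm of L^{-1} satisfies ‖L^{-1}‖₂ = 1/λ_min(L) ≤ n², where λ_min(L) denotes the smallest eigenvalue of L. -/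
open Matrix

namespace SDDMAux

def E {n : ℕ} (L : Matrix (Fin n) (Fin n) ℝ) (x : Fin n → ℝ) (T : Finset (Fin n)) : ℝ :=
  ∑ i ∈ T, ∑ j ∈ T, (-L i j) * (x i - x j) ^ 2

lemma quad {n : ℕ} (L : Matrix (Fin n) (Fin n) ℝ) (hs : ∀ i j, L i j = L j i) (x : Fin n → ℝ) :
    x ⬝ᵥ (L *ᵥ x) = ∑ i, (∑ j, L i j) * x i ^ 2 + 1 / 2 * E L x Finset.univ := by
  have h1 : ∑ i, ∑ j, L i j * x i ^ 2 = ∑ i, ∑ j, L i j * x j ^ 2 := by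
    rw [Finset.sum_comm]
    refine Finset.sum_congr rfl fun i _ => Finset.sum_congr rfl fun j _ => ?_
    rw [hs]
  have h2 : E L x Finset.univ = 2 * (x ⬝ᵥ (L *ᵥ x)) - ∑ i, ∑ j, L i j * x i ^ 2
      - ∑ i, ∑ j, L i j * x j ^ 2 := by
    simp only [E, dotProduct, mulVec, Finset.mul_sum, ← Finset.sum_sub_distrib]
    refine Finset.sum_congr rfl fun i _ => Finset.sum_congr rfl fun j _ => ?_
    ring
  simp only [Finset.sum_mul]
  rw [h2, ← h1]; ring

def G {n : ℕ} (L : Matrix (Fin n) (Fin n) ℝ) (hs : ∀ i j, L i j = L j i) :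
    SimpleGraph (Fin n) where
  Adj i j := i ≠ j ∧ L i j ≠ 0
  symm := ⟨fun i j h => ⟨h.1.symm, by rw [hs]; exact h.2⟩⟩
  loopless := ⟨fun i h => h.1 rfl⟩

lemma E_term {n : ℕ} (L : Matrix (Fin n) (Fin n) ℝ) (hoff : ∀ i j, i ≠ j → L i j ≤ 0)
    (x : Fin n → ℝ) (i j : Fin n) : 0 ≤ (-L i j) * (x i - x j) ^ 2 := by
  by_cases h : i = j
  · subst h; simp
  · exact mul_nonneg (neg_nonneg.2 (hoff i j h)) (sq_nonneg _)

lemma E_nonneg {n : ℕ} (L : Matrix (Fin n) (Fin n) ℝ) (hoff : ∀ i j, i ≠ j → L i j ≤ 0)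
    (x : Fin n → ℝ) (T : Finset (Fin n)) : 0 ≤ E L x T :=
  Finset.sum_nonneg fun i _ => Finset.sum_nonneg fun j _ => E_term L hoff x i j

lemma E_mono {n : ℕ} (L : Matrix (Fin n) (Fin n) ℝ) (hoff : ∀ i j, i ≠ j → L i j ≤ 0)
    (x : Fin n → ℝ) (T : Finset (Fin n)) : E L x T ≤ E L x Finset.univ := by
  unfold E
  refine (Finset.sum_le_sum fun i _ => Finset.sum_le_sum_of_subset_of_nonneg
    (Finset.subset_univ T) fun j _ _ => E_term L hoff x i j).trans ?_
  exact Finset.sum_le_sum_of_subset_of_nonneg (Finset.subset_univ T) fun i _ _ =>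
    Finset.sum_nonneg fun j _ => E_term L hoff x i j

lemma E_insert {n : ℕ} (L : Matrix (Fin n) (Fin n) ℝ) (hs : ∀ i j, L i j = L j i)
    (hoff : ∀ i j, i ≠ j → L i j ≤ 0)
    (x : Fin n → ℝ) (T : Finset (Fin n)) (u v : Fin n) (hu : u ∉ T) (hv : v ∈ T)
    (h1 : L u v ≤ -1) : E L x T + 2 * (x u - x v) ^ 2 ≤ E L x (insert u T) := by
  have hk : (x u - x v) ^ 2 ≤ ∑ j ∈ T, (-L u j) * (x u - x j) ^ 2 := by
    refine le_trans ?_ (Finset.single_le_sum (f := fun j => (-L u j) * (x u - x j) ^ 2)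
      (fun j _ => E_term L hoff x u j) hv)
    nlinarith [sq_nonneg (x u - x v)]
  have hk2 : ∑ j ∈ T, (-L j u) * (x j - x u) ^ 2 = ∑ j ∈ T, (-L u j) * (x u - x j) ^ 2 := by
    refine Finset.sum_congr rfl fun j _ => ?_
    rw [hs j u]; ring
  have : E L x (insert u T) = E L x T + ∑ j ∈ T, (-L j u) * (x j - x u) ^ 2
      + ∑ j ∈ T, (-L u j) * (x u - x j) ^ 2 := by
    unfold E
    simp only [Finset.sum_insert hu, Finset.sum_add_distrib]
    ring
  rw [this, hk2]; linarith

lemma path_bound {n : ℕ} (L : Matrix (Fin n) (Fin n) ℝ) (hs : ∀ i j, L i j = L j i)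
    (hoff : ∀ i j, i ≠ j → L i j ≤ 0) (hone : ∀ i j, i ≠ j → L i j ≠ 0 → L i j ≤ -1)
    (x : Fin n → ℝ) {u k : Fin n} (p : (G L hs).Walk u k) (hp : p.IsPath) :
    x u ^ 2 ≤ (p.length + 1) * (x k ^ 2 + 1 / 2 * E L x p.support.toFinset) := by
  induction p with
  | nil => have := E_nonneg L hoff x
           simp; rename_i a; have := this {a}; linarith
  | @cons u v k h p ih =>
    rw [SimpleGraph.Walk.cons_isPath_iff] at hp
    have ih := ih hp.1
    have h2 := E_insert L hs hoff x p.support.toFinset u v (by simpa using hp.2) (by simp)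
      (hone u v h.1 h.2)
    simp only [SimpleGraph.Walk.support_cons, List.toFinset_cons, SimpleGraph.Walk.length_cons]
    push_cast
    set a := x v
    set d := x u - x v with hd
    have hxu : x u = a + d := by simp [a, hd]
    set l : ℝ := (p.length : ℝ) + 1
    have hl : 0 < l := by positivity
    rw [hxu]
    set F := x k ^ 2 + 1 / 2 * E L x p.support.toFinset
    have h3 : (a + d) ^ 2 ≤ (l + 1) * (F + d ^ 2) := by
      have h4 : a ^ 2 / l ≤ F := by rw [div_le_iff₀ hl]; linarith
      have h5 : (a + d) ^ 2 ≤ (l + 1) * (a ^ 2 / l + d ^ 2) := by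
        have : (l + 1) * (a ^ 2 / l + d ^ 2) - (a + d) ^ 2 = (a - l * d) ^ 2 / l := by
          field_simp; ring
        have : 0 ≤ (a - l * d) ^ 2 / l := by positivity
        linarith
      refine h5.trans ?_
      gcongr
    refine h3.trans (mul_le_mul_of_nonneg_left ?_ (by positivity))
    simp only [F]
    linarith

lemma exists_slack {n : ℕ} (L : Matrix (Fin n) (Fin n) ℝ) (hs : ∀ i j, L i j = L j i)
    (hInv : IsUnit L) (u : Fin n) : ∃ k, (G L hs).Reachable u k ∧ ∑ j, L k j ≠ 0 := by
  by_contra! hcon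
  classical
  let c : Fin n → ℝ := fun i => if (G L hs).Reachable u i then 1 else 0
  have h0 : L *ᵥ c = 0 := by
    ext i
    by_cases hi : (G L hs).Reachable u i
    · have := hcon i hi
      rw [Pi.zero_apply, ← this]
      change ∑ j, L i j * c j = ∑ j, L i j
      refine Finset.sum_congr rfl fun j _ => ?_
      by_cases hj : (G L hs).Reachable u j
      · simp [c, hj]
      · have : L i j = 0 := by
          by_contra hne
          refine hj (hi.trans (SimpleGraph.Adj.reachable ⟨?_, hne⟩))
          rintro rfl; exact hj hi
        simp [this]
    · change ∑ j, L i j * c j = 0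
      refine Finset.sum_eq_zero fun j _ => ?_
      by_cases hj : (G L hs).Reachable u j
      · have : L i j = 0 := by
          by_contra hne
          refine hi (hj.trans (SimpleGraph.Adj.reachable ⟨?_, by rw [hs]; exact hne⟩))
          rintro rfl; exact hi hj
        simp [this]
      · simp [c, hj]
  have := Matrix.mulVec_injective_of_isUnit hInv (h0.trans (Matrix.mulVec_zero L).symm)
  have := congrFun this u
  simp [c] at this

lemma rayleigh {n : ℕ} (L : Matrix (Fin n) (Fin n) ℝ) (hL : IsRDDL L)
    (hs : ∀ i j, L i j = L j i) (hInv : IsUnit L) (hint : ∀ i j, ∃ z : ℤ, L i j = (z : ℝ))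
    (x : Fin n → ℝ) : ∑ i, x i ^ 2 ≤ (n : ℝ) ^ 2 * (x ⬝ᵥ (L *ᵥ x)) := by
  obtain ⟨hpos, hoff, hdom⟩ := hL
  have hone : ∀ i j, i ≠ j → L i j ≠ 0 → L i j ≤ -1 := by
    intro i j hij h0
    have h1 := lt_of_le_of_ne (hoff i j hij) h0
    obtain ⟨z, hz⟩ := hint i j
    rw [hz] at h1 ⊢
    have : z < 0 := by exact_mod_cast h1
    have : z ≤ -1 := by omega
    exact_mod_cast this
  have hS : ∀ i, 0 ≤ ∑ j, L i j := by
    intro i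
    rw [← Finset.add_sum_erase _ _ (Finset.mem_univ i)]
    have : -∑ j ∈ Finset.univ.erase i, |L i j| ≤ ∑ j ∈ Finset.univ.erase i, L i j := by
      rw [← Finset.sum_neg_distrib]
      exact Finset.sum_le_sum fun j _ => neg_abs_le _
    linarith [hdom i]
  have hS1 : ∀ i, ∑ j, L i j ≠ 0 → 1 ≤ ∑ j, L i j := by
    intro i h0
    have h1 := lt_of_le_of_ne (hS i) h0.symm
    choose z hz using hint i
    simp only [hz] at h1 ⊢
    have : 0 < ∑ j, z j := by exact_mod_cast h1
    have : 1 ≤ ∑ j, z j := by omega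
    exact_mod_cast this
  have key : ∀ u, x u ^ 2 ≤ n * (x ⬝ᵥ (L *ᵥ x)) := by
    intro u
    obtain ⟨k, ⟨w⟩, hk⟩ := exists_slack L hs hInv u
    classical
    obtain ⟨p, hp⟩ := w.toPath
    refine (path_bound L hs hoff hone x p hp).trans ?_
    have hlen : p.length + 1 ≤ n := by simpa using hp.length_lt
    have hlen' : (p.length : ℝ) + 1 ≤ n := by exact_mod_cast hlen
    have hk1 : x k ^ 2 ≤ ∑ i, (∑ j, L i j) * x i ^ 2 := by
      refine le_trans ?_ (Finset.single_le_sum (f := fun i => (∑ j, L i j) * x i ^ 2)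
        (fun i _ => mul_nonneg (hS i) (sq_nonneg _)) (Finset.mem_univ k))
      nlinarith [hS1 k hk, sq_nonneg (x k)]
    have hE := E_mono L hoff x p.support.toFinset
    have hE0 := E_nonneg L hoff x p.support.toFinset
    rw [quad L hs]
    gcongr
  calc ∑ i, x i ^ 2 ≤ ∑ _i : Fin n, n * (x ⬝ᵥ (L *ᵥ x)) := Finset.sum_le_sum fun i _ => key i
    _ = _ := by simp; ring

end SDDMAux

/-- For an `n × n` invertible SDDM matrix `L` (symmetric invertible RDDL) with integer
entries in `[-U, U]`, the ℓ₂ operator norm of `L⁻¹` equals `1 / λ_min L` and is at most `n²`. -/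
theorem sddm_inverse_opNorm_bound {n : ℕ} (hn : 0 < n) (U : ℕ) (hU : 1 ≤ U)
    (L : Matrix (Fin n) (Fin n) ℝ) (hL : IsRDDL L) (hLsym : L.IsHermitian)
    (hInv : IsUnit L)
    (hint : ∀ i j, ∃ z : ℤ, L i j = (z : ℝ) ∧ |z| ≤ (U : ℤ)) :
    ‖Matrix.toEuclideanCLM (𝕜 := ℝ) L⁻¹‖ = 1 / (⨅ i, hLsym.eigenvalues i) ∧
    ‖Matrix.toEuclideanCLM (𝕜 := ℝ) L⁻¹‖ ≤ (n : ℝ) ^ 2 := by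
  have hs : ∀ i j, L i j = L j i := fun i j => by
    have := hLsym.apply j i; simpa using this
  haveI : Nonempty (Fin n) := ⟨⟨0, hn⟩⟩
  have hdet : IsUnit L.det := (Matrix.isUnit_iff_isUnit_det L).1 hInv
  obtain ⟨i0, hi0⟩ := exists_eq_ciInf_of_finite (f := hLsym.eigenvalues)
  have hmin : ∀ i, hLsym.eigenvalues i0 ≤ hLsym.eigenvalues i := fun i => by
    rw [hi0]; exact ciInf_le (Set.finite_range _).bddBelow i
  rw [← hi0]
  set b := hLsym.eigenvectorBasis with hb
  set lam := hLsym.eigenvalues i0 with hlam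
  have hnpos : (0 : ℝ) < (n : ℝ) ^ 2 := by positivity
  have heig : ∀ i, Matrix.toEuclideanCLM (𝕜 := ℝ) L (b i) = hLsym.eigenvalues i • b i := by
    intro i
    have := hLsym.mulVec_eigenvectorBasis i
    ext j
    simpa using congrFun this j
  have hlow : 1 ≤ (n : ℝ) ^ 2 * lam := by
    have h := SDDMAux.rayleigh L hL hs hInv (fun i j => (hint i j).imp fun z h => h.1) (b i0)
    have h1 : ∑ i, (b i0) i ^ 2 = 1 := by
      have := b.orthonormal.1 i0
      rw [← EuclideanSpace.real_norm_sq_eq, this]; norm_num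
    rw [hLsym.mulVec_eigenvectorBasis i0, dotProduct_smul] at h
    have h2 : (b i0 : Fin n → ℝ) ⬝ᵥ (b i0 : Fin n → ℝ) = 1 := by
      rw [← h1]; simp [dotProduct, sq]
    rw [h1] at h
    change 1 ≤ (n : ℝ) ^ 2 * (lam * ((b i0 : Fin n → ℝ) ⬝ᵥ (b i0 : Fin n → ℝ))) at h
    rwa [h2, mul_one] at h
  have hlampos : 0 < lam := by
    by_contra! h
    nlinarith
  have hmulinv : ∀ y, Matrix.toEuclideanCLM (𝕜 := ℝ) L (Matrix.toEuclideanCLM (𝕜 := ℝ) L⁻¹ y) = y := by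
    intro y
    rw [← ContinuousLinearMap.mul_apply, ← map_mul, Matrix.mul_nonsing_inv L hdet, map_one]
    rfl
  have hinvmul : ∀ y, Matrix.toEuclideanCLM (𝕜 := ℝ) L⁻¹ (Matrix.toEuclideanCLM (𝕜 := ℝ) L y) = y := by
    intro y
    rw [← ContinuousLinearMap.mul_apply, ← map_mul, Matrix.nonsing_inv_mul L hdet, map_one]
    rfl
  have hsa : ∀ y z, inner ℝ y (Matrix.toEuclideanCLM (𝕜 := ℝ) L z) =
      inner ℝ (Matrix.toEuclideanCLM (𝕜 := ℝ) L y) z :=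
    fun y z => ((Matrix.isSymmetric_toEuclideanLin_iff.2 hLsym) y z).symm
  have hexp : ∀ y, lam * ‖y‖ ≤ ‖Matrix.toEuclideanCLM (𝕜 := ℝ) L y‖ := by
    intro y
    refine le_of_sq_le_sq ?_ (norm_nonneg _)
    rw [mul_pow, ← b.sum_sq_norm_inner_right y, ← b.sum_sq_norm_inner_right, Finset.mul_sum]
    refine Finset.sum_le_sum fun i _ => ?_
    rw [hsa, heig, real_inner_smul_left, norm_mul, mul_pow]
    have := hmin i
    gcongr
    rw [Real.norm_eq_abs]; exact this.trans (le_abs_self _)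
  have hnorm : ‖Matrix.toEuclideanCLM (𝕜 := ℝ) L⁻¹‖ = 1 / lam := by
    apply le_antisymm
    · refine ContinuousLinearMap.opNorm_le_bound _ (by positivity) fun y => ?_
      have := hexp (Matrix.toEuclideanCLM (𝕜 := ℝ) L⁻¹ y)
      rw [hmulinv] at this
      rw [one_div, inv_mul_eq_div, le_div_iff₀ hlampos]; linarith
    · have h1 := hinvmul (b i0)
      rw [heig, map_smul] at h1
      have h2 := congrArg norm h1
      have h3 := (Matrix.toEuclideanCLM (𝕜 := ℝ) L⁻¹).le_opNorm (b i0)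
      rw [norm_smul, b.orthonormal.1 i0, Real.norm_of_nonneg hlampos.le] at h2
      rw [b.orthonormal.1 i0, mul_one] at h3
      rw [div_le_iff₀ hlampos]
      nlinarith
  refine ⟨hnorm, ?_⟩
  rw [hnorm, div_le_iff₀ hlampos]
  exact hlow
end

section
/- Let M ∈ ℝ^{n×n} be an invertible RDDL matrix and let t ∈ [n]. Let M^{(t)} be the matrix obtained from M by zeroing out row t except for the diagonal entry, i.e., M^{(t)}_{tj} = 0 for j ≠ t, M^{(t)}_{tt} = M_{tt}, and M^{(t)}_{ij} = M_{ij} for i ≠ t. Then (M^{-1})_{tt} > 0, the matrix M^{(t)} is invertible, and for every s ∈ [n] one has ((M^{(t)})^{-1})_{st} = (M^{-1})_{st} / (M_{tt} · (M^{-1})_{tt}). -/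
open Matrix

theorem rddl_inv_nonneg_aux {n : ℕ} (M : Matrix (Fin n) (Fin n) ℝ) (hM : IsRDDL M)
    (ε : ℝ) (hε : 0 < ε) (hd : (M + ε • (1 : Matrix (Fin n) (Fin n) ℝ)).det ≠ 0)
    (s t : Fin n) : 0 ≤ (M + ε • (1 : Matrix (Fin n) (Fin n) ℝ))⁻¹ s t := by
  obtain ⟨h1, h2, h3⟩ := hM
  set A := M + ε • (1 : Matrix (Fin n) (Fin n) ℝ) with hA
  have hmul : A * A⁻¹ = 1 := Matrix.mul_nonsing_inv A (isUnit_iff_ne_zero.mpr hd)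
  obtain ⟨k, -, hk⟩ := Finset.exists_min_image Finset.univ (fun i => A⁻¹ i t) ⟨s, Finset.mem_univ s⟩
  refine le_trans ?_ (hk s (Finset.mem_univ s))
  by_contra! hneg
  have hrow : ∑ j, M k j * A⁻¹ j t + ε * A⁻¹ k t = (1 : Matrix (Fin n) (Fin n) ℝ) k t := by
    rw [← hmul]
    conv_rhs => rw [hA, Matrix.add_mul, ← hA, Matrix.smul_mul, Matrix.one_mul]
    simp [Matrix.mul_apply]
  have hone : 0 ≤ (1 : Matrix (Fin n) (Fin n) ℝ) k t := by
    rw [Matrix.one_apply]; split_ifs <;> norm_num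
  have hle : ∑ j, M k j * A⁻¹ j t ≤ ∑ j, M k j * A⁻¹ k t := by
    apply Finset.sum_le_sum
    intro j _
    by_cases h : k = j
    · subst h; exact le_rfl
    · exact mul_le_mul_of_nonpos_left (hk j (Finset.mem_univ j)) (h2 k j h)
  have hsum : 0 ≤ ∑ j, M k j := by
    rw [← Finset.add_sum_erase _ _ (Finset.mem_univ k)]
    have h4 : -∑ j ∈ Finset.univ.erase k, |M k j| ≤ ∑ j ∈ Finset.univ.erase k, M k j := by
      rw [← Finset.sum_neg_distrib]
      exact Finset.sum_le_sum fun j _ => neg_abs_le _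
    linarith [h3 k]
  rw [← Finset.sum_mul] at hle
  nlinarith [mul_nonneg hsum (neg_nonneg.mpr hneg.le), mul_pos hε (neg_pos.mpr hneg)]

theorem rddl_inv_nonneg {n : ℕ} (M : Matrix (Fin n) (Fin n) ℝ) (hM : IsRDDL M)
    (hd : M.det ≠ 0) (s t : Fin n) : 0 ≤ M⁻¹ s t := by
  let F : ℝ → Matrix (Fin n) (Fin n) ℝ := fun ε => M + ε • (1 : Matrix (Fin n) (Fin n) ℝ)
  have hF : Continuous F := by fun_prop
  have hF0 : F 0 = M := by simp [F]
  have hdet : Continuous fun ε => (F ε).det := hF.matrix_det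
  have hadj : Continuous fun ε => (F ε).adjugate s t :=
    (hF.matrix_adjugate).matrix_elem s t
  have hform : ∀ A : Matrix (Fin n) (Fin n) ℝ, A⁻¹ s t = A.det⁻¹ * A.adjugate s t := by
    intro A; simp [Matrix.inv_def]
  have hc : ContinuousAt (fun ε => (F ε)⁻¹ s t) 0 := by
    simp only [hform]
    exact (hdet.continuousAt.inv₀ (by simpa [hF0] using hd)).mul hadj.continuousAt
  have ht : Filter.Tendsto (fun ε => (F ε)⁻¹ s t) (nhdsWithin 0 (Set.Ioi 0)) (nhds (M⁻¹ s t)) := by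
    have := hc.tendsto
    simp only [hF0] at this
    exact this.mono_left nhdsWithin_le_nhds
  have hne : ∀ᶠ ε in nhdsWithin (0 : ℝ) (Set.Ioi 0), (F ε).det ≠ 0 :=
    (hdet.continuousAt.eventually_ne (by simpa [hF0] using hd)).filter_mono nhdsWithin_le_nhds
  refine ge_of_tendsto ht ?_
  filter_upwards [hne, self_mem_nhdsWithin] with ε h1 h2
  exact rddl_inv_nonneg_aux M hM ε h2 h1 s t

/-- For an invertible RDDL matrix `M` and index `t`, let `Mt` be `M` with row `t`
zeroed out except for the diagonal entry.  Then `(M⁻¹)ₜₜ > 0`, `Mt` is invertible, and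
`((Mt)⁻¹)ₛₜ = (M⁻¹)ₛₜ / (Mₜₜ · (M⁻¹)ₜₜ)` for all `s`. -/
theorem escape_probability_formula {n : ℕ}
    (M : Matrix (Fin n) (Fin n) ℝ) (hM : IsRDDL M) (hInv : IsUnit M)
    (t : Fin n) (Mt : Matrix (Fin n) (Fin n) ℝ)
    (hMt : Mt = M.updateRow t (fun j => if j = t then M t t else 0)) :
    0 < M⁻¹ t t ∧ IsUnit Mt ∧
      ∀ s, Mt⁻¹ s t = M⁻¹ s t / (M t t * M⁻¹ t t) := by
  have hd : M.det ≠ 0 := ((Matrix.isUnit_iff_isUnit_det M).mp hInv).ne_zero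
  have hmul : M * M⁻¹ = 1 := Matrix.mul_nonsing_inv M (isUnit_iff_ne_zero.mpr hd)
  have hx := rddl_inv_nonneg M hM hd
  obtain ⟨h1, h2, -⟩ := hM
  have hpos : 0 < M⁻¹ t t := by
    have h := congrFun (congrFun hmul t) t
    rw [Matrix.mul_apply, ← Finset.add_sum_erase _ _ (Finset.mem_univ t), Matrix.one_apply_eq] at h
    have h4 : ∑ j ∈ Finset.univ.erase t, M t j * M⁻¹ j t ≤ 0 :=
      Finset.sum_nonpos fun j hj => mul_nonpos_of_nonpos_of_nonneg
        (h2 t j (Finset.ne_of_mem_erase hj).symm) (hx j t)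
    exact pos_of_mul_pos_right (by linarith : 0 < M t t * M⁻¹ t t) (h1 t).le
  have hadj : ∀ s, M.adjugate s t = M.det * M⁻¹ s t := by
    intro s
    simp [Matrix.inv_def, hd]
  have hrow : (fun j => if j = t then M t t else 0) = M t t • (Pi.single t 1 : Fin n → ℝ) := by
    ext j
    simp [Pi.single_apply]
  have hdet : Mt.det = M t t * (M.det * M⁻¹ t t) := by
    rw [hMt, hrow, Matrix.det_updateRow_smul, ← Matrix.adjugate_apply, hadj]
  have hadj' : ∀ s, Mt.adjugate s t = M.adjugate s t := by
    intro s
    rw [Matrix.adjugate_apply, Matrix.adjugate_apply, hMt, Matrix.updateRow_idem]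
  have hdne : Mt.det ≠ 0 := by
    rw [hdet]
    exact mul_ne_zero (h1 t).ne' (mul_ne_zero hd hpos.ne')
  refine ⟨hpos, (Matrix.isUnit_iff_isUnit_det Mt).mpr (isUnit_iff_ne_zero.mpr hdne), fun s => ?_⟩
  have h5 : Mt⁻¹ s t = Mt.det⁻¹ * Mt.adjugate s t := by simp [Matrix.inv_def]
  have h6 := (h1 t).ne'
  have h7 := hpos.ne'
  rw [h5, hadj', hadj, hdet]
  field_simp
end

section
/- Let M ∈ ℝ^{n×n} be an invertible RDDL matrix. Then every entry of M^{-1} is nonnegative, and moreover every diagonal entry satisfies (M^{-1})_{jj} ≥ 1/M_{jj} > 0. -/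
open Matrix

lemma rddl_strict {n : ℕ} (M : Matrix (Fin n) (Fin n) ℝ) (hM : IsRDDL M)
    (y : Fin n → ℝ) (hy : ∀ i, 0 < (M *ᵥ y) i) (k : Fin n) : 0 ≤ y k := by
  obtain ⟨hd, ho, hs⟩ := hM
  by_contra hk
  push Not at hk
  obtain ⟨i, -, hi⟩ := Finset.exists_min_image Finset.univ y ⟨k, Finset.mem_univ k⟩
  have hi' : y i < 0 := lt_of_le_of_lt (hi k (Finset.mem_univ k)) hk
  have h1 : (M *ᵥ y) i = M i i * y i + ∑ j ∈ Finset.univ.erase i, M i j * y j := by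
    rw [Finset.add_sum_erase Finset.univ (fun j => M i j * y j) (Finset.mem_univ i)]
    rfl
  have h2 : ∑ j ∈ Finset.univ.erase i, M i j * y j
      ≤ ∑ j ∈ Finset.univ.erase i, |M i j| * (- y i) := by
    apply Finset.sum_le_sum
    intro j hj
    have hj' := ho i j (Finset.ne_of_mem_erase hj).symm
    rw [abs_of_nonpos hj']
    nlinarith [hi j (Finset.mem_univ j)]
  rw [← Finset.sum_mul] at h2
  have h3 := hy i
  nlinarith [hs i]

/-- The inverse of an invertible RDDL matrix is entrywise nonnegative, and its diagonal
entries satisfy `(M⁻¹)ⱼⱼ ≥ 1 / Mⱼⱼ > 0`. -/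
theorem rddl_inverse_nonneg {n : ℕ}
    (M : Matrix (Fin n) (Fin n) ℝ) (hM : IsRDDL M) (hInv : IsUnit M) :
    (∀ i j, 0 ≤ M⁻¹ i j) ∧ (∀ j, 1 / M j j ≤ M⁻¹ j j ∧ 0 < 1 / M j j) := by
  have hMM : M * M⁻¹ = 1 := Matrix.mul_nonsing_inv M ((Matrix.isUnit_iff_isUnit_det M).1 hInv)
  have hnn : ∀ i j, 0 ≤ M⁻¹ i j := by
    intro i j
    set u : Fin n → ℝ := M⁻¹ *ᵥ (fun _ => 1) with hu
    have key : ∀ ε : ℝ, 0 < ε → 0 ≤ M⁻¹ i j + ε * u i := by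
      intro ε hε
      refine rddl_strict M hM ((fun k => M⁻¹ k j) + ε • u) ?_ i
      intro k
      have h1 : (M *ᵥ (fun k => M⁻¹ k j)) k = (1 : Matrix (Fin n) (Fin n) ℝ) k j := by
        rw [← hMM]; rfl
      have h2 : M *ᵥ u = fun _ => 1 := by
        rw [hu, Matrix.mulVec_mulVec, hMM, Matrix.one_mulVec]
      rw [Matrix.mulVec_add, Matrix.mulVec_smul, h2, Pi.add_apply, h1]
      simp only [Pi.smul_apply, smul_eq_mul, mul_one, Matrix.one_apply]
      split_ifs <;> linarith
    by_contra hneg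
    push Not at hneg
    have hp : 0 < |u i| + 1 := by positivity
    have h := key (-(M⁻¹ i j) / (2 * (|u i| + 1))) (div_pos (by linarith) (by linarith))
    have h4 : -(M⁻¹ i j) / (2 * (|u i| + 1)) * u i ≤
        -(M⁻¹ i j) / (2 * (|u i| + 1)) * (|u i| + 1) :=
      mul_le_mul_of_nonneg_left (by linarith [le_abs_self (u i)])
        (div_pos (by linarith) (by linarith)).le
    have h5 : -(M⁻¹ i j) / (2 * (|u i| + 1)) * (|u i| + 1) = -(M⁻¹ i j) / 2 := by
      field_simp
    linarith
  refine ⟨hnn, fun j => ?_⟩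
  obtain ⟨hd, ho, -⟩ := hM
  refine ⟨?_, one_div_pos.2 (hd j)⟩
  rw [div_le_iff₀ (hd j)]
  have h1 : (M * M⁻¹) j j = 1 := by rw [hMM, Matrix.one_apply_eq]
  rw [Matrix.mul_apply, ← Finset.add_sum_erase Finset.univ _ (Finset.mem_univ j)] at h1
  have h2 : ∑ k ∈ Finset.univ.erase j, M j k * M⁻¹ k j ≤ 0 :=
    Finset.sum_nonpos fun k hk =>
      mul_nonpos_of_nonpos_of_nonneg (ho j k (Finset.ne_of_mem_erase hk).symm) (hnn k j)
  linarith [mul_comm (M j j) (M⁻¹ j j)]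
end

section
/- Let M ∈ ℝ^{n×n} be an invertible RDDL matrix, b ∈ ℝ^n a nonnegative vector, and x̄ := M^{-1}b. Let 0 < ε < β/2 and let x̃ ∈ ℝ^n satisfy ‖x̃ − x̄‖₂ ≤ ε‖b‖₂. Let F := { i ∈ [n] : x̄_i ≥ β‖b‖₁ }. Then for all i ∈ F, ((β−ε)/β)·x̄_i ≤ x̃_i ≤ ((β+ε)/β)·x̄_i; in particular x̃_F ≈_{3ε/(2β)} x̄_F entrywise. -/
open Matrix

/-- `a ≈_ε b` : `e^{-ε}·a ≤ b ≤ e^{ε}·a`. -/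
def EApprox (ε a b : ℝ) : Prop := Real.exp (-ε) * a ≤ b ∧ b ≤ Real.exp ε * a

/-- The ℓ₁ norm of a vector. -/
noncomputable def l1norm {n : ℕ} (v : Fin n → ℝ) : ℝ := ∑ i, |v i|

/-- The ℓ₂ norm of a vector. -/
noncomputable def l2norm {n : ℕ} (v : Fin n → ℝ) : ℝ := Real.sqrt (∑ i, (v i) ^ 2)

/-- A normwise approximate solution multiplicatively approximates all large entries of
the exact solution `x̄ = M⁻¹ b`. -/
theorem large_entries_guarantee {n : ℕ}
    (M : Matrix (Fin n) (Fin n) ℝ) (hM : IsRDDL M) (hInv : IsUnit M)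
    (b : Fin n → ℝ) (hb : ∀ i, 0 ≤ b i)
    (xbar : Fin n → ℝ) (hxbar : xbar = M⁻¹ *ᵥ b)
    (ε β : ℝ) (hε : 0 < ε) (hεβ : ε < β / 2)
    (xtil : Fin n → ℝ) (hxtil : l2norm (xtil - xbar) ≤ ε * l2norm b) :
    ∀ i, β * l1norm b ≤ xbar i →
      ((β - ε) / β * xbar i ≤ xtil i ∧ xtil i ≤ (β + ε) / β * xbar i) ∧
      EApprox (3 * ε / (2 * β)) (xtil i) (xbar i) := by
  intro i hi
  have hβ : 0 < β := by linarith
  have hb1 : l2norm b ≤ l1norm b := by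
    unfold l2norm l1norm
    apply Real.sqrt_le_iff.mpr
    refine ⟨Finset.sum_nonneg fun j _ => abs_nonneg _, ?_⟩
    have h := Finset.sum_sq_le_sq_sum_of_nonneg (s := Finset.univ) (f := fun j => |b j|)
      (fun j _ => abs_nonneg _)
    simpa [sq_abs] using h
  have hb0 : 0 ≤ l1norm b := Finset.sum_nonneg fun j _ => abs_nonneg _
  have hd : |xtil i - xbar i| ≤ l2norm (xtil - xbar) := by
    unfold l2norm
    apply Real.abs_le_sqrt
    exact Finset.single_le_sum (f := fun j => ((xtil - xbar) j) ^ 2)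
      (fun j _ => sq_nonneg _) (Finset.mem_univ i)
  have hx0 : 0 ≤ xbar i := le_trans (by positivity) hi
  obtain ⟨t, rfl⟩ : ∃ t, ε = t * β := ⟨ε / β, by field_simp⟩
  have ht0 : 0 < t := pos_of_mul_pos_left hε hβ.le
  have ht1 : t < 1 / 2 := by
    by_contra h
    push Not at h
    nlinarith
  have hd2 : |xtil i - xbar i| ≤ t * xbar i := by
    have h1 := mul_le_mul_of_nonneg_left hb1 hε.le
    have h2 := mul_le_mul_of_nonneg_left hi ht0.le
    linarith
  obtain ⟨hl, hu⟩ := abs_le.mp hd2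
  have e1 : (β - t * β) / β = 1 - t := by field_simp
  have e2 : (β + t * β) / β = 1 + t := by field_simp
  have e3 : 3 * (t * β) / (2 * β) = 3 * t / 2 := by field_simp
  rw [e1, e2, e3]
  have hL : (1 - t) * xbar i ≤ xtil i := by linarith
  have hU : xtil i ≤ (1 + t) * xbar i := by linarith
  refine ⟨⟨hL, hU⟩, ?_, ?_⟩
  · rw [Real.exp_neg, inv_mul_le_iff₀ (Real.exp_pos _)]
    have h := Real.add_one_le_exp (3 * t / 2)
    exact hU.trans (mul_le_mul_of_nonneg_right (by linarith) hx0)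
  · have h := Real.quadratic_le_exp_of_nonneg (x := 3 * t / 2) (by positivity)
    have h1 : 1 ≤ Real.exp (3 * t / 2) * (1 - t) := by
      have h2 := mul_le_mul_of_nonneg_right h (show 0 ≤ 1 - t by linarith)
      refine le_trans ?_ h2
      have h3 : 0 ≤ t * (1 / 2 - 3 / 8 * t - 9 / 8 * t ^ 2) :=
        mul_nonneg ht0.le (by nlinarith)
      linarith
    calc xbar i = 1 * xbar i := (one_mul _).symm
      _ ≤ (Real.exp (3 * t / 2) * (1 - t)) * xbar i := mul_le_mul_of_nonneg_right h1 hx0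
      _ = Real.exp (3 * t / 2) * ((1 - t) * xbar i) := by ring
      _ ≤ _ := mul_le_mul_of_nonneg_left hL (Real.exp_pos _).le
end

section
/- Let M ∈ ℝ^{n×n} be an invertible RDDL matrix with all entries integers in [−U, U] for some integer U ≥ 1, and let b ∈ ℝ^n be a nonnegative vector. Then there exists an index i ∈ [n] such that (M^{-1}b)_i ≥ ‖b‖₁/(nU). -/
open Matrix

/-- Inverse nonnegativity: if `M x ≥ 0` with `M` an invertible RDDL matrix then `x ≥ 0`. -/
lemma rddl_nonneg {n : ℕ} (M : Matrix (Fin n) (Fin n) ℝ) (hM : IsRDDL M) (hdet : M.det ≠ 0)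
    (x : Fin n → ℝ) (hx : ∀ i, 0 ≤ (M *ᵥ x) i) (k : Fin n) : 0 ≤ x k := by
  obtain ⟨hpos, hoff, hdom⟩ := hM
  obtain ⟨i₀, -, hmin⟩ := Finset.exists_min_image Finset.univ x ⟨k, Finset.mem_univ k⟩
  by_contra! hk
  have hm : x i₀ < 0 := lt_of_le_of_lt (hmin k (Finset.mem_univ k)) hk
  have hrow : ∀ i, 0 ≤ ∑ j, M i j := by
    intro i
    have h1 : ∑ j ∈ Finset.univ.erase i, |M i j| = - ∑ j ∈ Finset.univ.erase i, M i j := by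
      rw [← Finset.sum_neg_distrib]
      refine Finset.sum_congr rfl fun j hj => abs_of_nonpos (hoff i j ?_)
      exact (Finset.ne_of_mem_erase hj).symm
    have h2 := Finset.add_sum_erase Finset.univ (fun j => M i j) (Finset.mem_univ i)
    have h3 := hdom i
    linarith
  have hterm : ∀ i, x i = x i₀ → ∀ j, M i j * (x j - x i₀) ≤ 0 := by
    intro i hi j
    by_cases hij : i = j
    · subst hij
      simp [hi]
    · exact mul_nonpos_of_nonpos_of_nonneg (hoff i j hij)
        (sub_nonneg.2 (hmin j (Finset.mem_univ j)))
  have hsplit : ∀ i, (M *ᵥ x) i = (∑ j, M i j) * x i₀ + ∑ j, M i j * (x j - x i₀) := by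
    intro i
    rw [Finset.sum_mul, ← Finset.sum_add_distrib]
    simp only [Matrix.mulVec, dotProduct]
    exact Finset.sum_congr rfl fun j _ => by ring
  have hboth : ∀ i, x i = x i₀ →
      ∑ j, M i j = 0 ∧ ∀ j, M i j * (x j - x i₀) = 0 := by
    intro i hi
    have h1 := hx i
    rw [hsplit i] at h1
    have h2 : ∑ j, M i j * (x j - x i₀) ≤ 0 := Finset.sum_nonpos fun j _ => hterm i hi j
    have h3 : (∑ j, M i j) * x i₀ ≤ 0 := mul_nonpos_of_nonneg_of_nonpos (hrow i) hm.le
    have h4 : (∑ j, M i j) * x i₀ = 0 := by linarith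
    have h5 : ∑ j, M i j * (x j - x i₀) = 0 := by linarith
    refine ⟨(mul_eq_zero.1 h4).resolve_right hm.ne, fun j => ?_⟩
    exact (Finset.sum_eq_zero_iff_of_nonpos fun j _ => hterm i hi j).1 h5 j (Finset.mem_univ j)
  have hblock : ∀ i, x i = x i₀ → ∀ j, ¬ x j = x i₀ → M i j = 0 := fun i hi j hj =>
    (mul_eq_zero.1 ((hboth i hi).2 j)).resolve_right (sub_ne_zero.2 hj)
  have hd := Matrix.twoBlockTriangular_det' M (fun i => x i = x i₀) hblock
  have hz : (Matrix.toSquareBlockProp M (fun i => x i = x i₀)).det = 0 := by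
    rw [← Matrix.exists_mulVec_eq_zero_iff]
    refine ⟨fun _ => 1, fun h => one_ne_zero (congrFun h ⟨i₀, rfl⟩), ?_⟩
    funext i
    simp only [Matrix.mulVec, dotProduct, mul_one, Pi.zero_apply, Matrix.toSquareBlockProp_def,
      Matrix.of_apply]
    rw [← (hboth i.1 i.2).1, ← Fintype.sum_subtype_add_sum_subtype (fun j => x j = x i₀)
      (fun j => M i.1 j)]
    rw [Finset.sum_eq_zero (s := (Finset.univ : Finset {j // ¬ x j = x i₀}))
      fun j _ => hblock i.1 i.2 j.1 j.2, add_zero]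
  rw [hz, zero_mul] at hd
  exact hdet hd

/-- For an invertible RDDL matrix with integer entries in `[-U, U]` and a nonnegative
vector `b`, some entry of `M⁻¹ b` is at least `‖b‖₁ / (n·U)`. -/
theorem exists_large_entry {n : ℕ} (hn : 0 < n) (U : ℕ) (hU : 1 ≤ U)
    (M : Matrix (Fin n) (Fin n) ℝ) (hM : IsRDDL M) (hInv : IsUnit M)
    (hint : ∀ i j, ∃ z : ℤ, M i j = (z : ℝ) ∧ |z| ≤ (U : ℤ))
    (b : Fin n → ℝ) (hb : ∀ i, 0 ≤ b i) :
    ∃ i, l1norm b / ((n : ℝ) * U) ≤ (M⁻¹ *ᵥ b) i := by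
  have hdet : IsUnit M.det := (Matrix.isUnit_iff_isUnit_det M).1 hInv
  have hMx : M *ᵥ (M⁻¹ *ᵥ b) = b := by
    rw [Matrix.mulVec_mulVec, Matrix.mul_nonsing_inv M hdet, Matrix.one_mulVec]
  have hx := rddl_nonneg M hM hdet.ne_zero (M⁻¹ *ᵥ b) (by rw [hMx]; exact hb)
  generalize M⁻¹ *ᵥ b = x at *
  obtain ⟨i, -, hmax⟩ := Finset.exists_max_image Finset.univ b ⟨⟨0, hn⟩, Finset.mem_univ _⟩
  refine ⟨i, ?_⟩
  have hn' : (0 : ℝ) < n := by exact_mod_cast hn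
  have hU' : (0 : ℝ) < U := by exact_mod_cast hU
  have h1 : l1norm b ≤ n * b i := by
    have h := Finset.sum_le_card_nsmul Finset.univ (fun j => |b j|) (b i)
      (fun j hj => by rw [abs_of_nonneg (hb j)]; exact hmax j hj)
    simpa [l1norm] using h
  have h2 : M i i ≤ U := by
    obtain ⟨z, hz, hzU⟩ := hint i i
    rw [hz]
    exact_mod_cast (le_abs_self z).trans hzU
  have h3 : b i ≤ M i i * x i := by
    have h4 : b i = ∑ j, M i j * x j := (congrFun hMx i).symm
    rw [h4, ← Finset.add_sum_erase Finset.univ (fun j => M i j * x j) (Finset.mem_univ i)]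
    have h5 : ∑ j ∈ Finset.univ.erase i, M i j * x j ≤ 0 :=
      Finset.sum_nonpos fun j hj => mul_nonpos_of_nonpos_of_nonneg
        (hM.2.1 i j (Finset.ne_of_mem_erase hj).symm) (hx j)
    linarith
  have h6 : b i ≤ U * x i := h3.trans (mul_le_mul_of_nonneg_right h2 (hx i))
  rw [div_le_iff₀ (by positivity)]
  calc l1norm b ≤ n * b i := h1
    _ ≤ n * (U * x i) := mul_le_mul_of_nonneg_left h6 hn'.le
    _ = x i * (n * U) := by ring
end

section
/- Let L be an n×n invertible SDDM matrix with integer entries in [−U, U] for some integer U ≥ 1, and let i, j ∈ [n] with i ≠ j and L_{ij} ≠ 0. Then L^{-1}e^{(i)} ≤ nU · L^{-1}e^{(j)} entrywise, i.e., for every k ∈ [n], (L^{-1})_{ki} ≤ nU · (L^{-1})_{kj}. -/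
open Matrix

theorem rddl_inv_nonneg_s10 {n : ℕ} (L : Matrix (Fin n) (Fin n) ℝ) (hL : IsRDDL L)
    (hSym : L.IsSymm) (hInv : IsUnit L) (x : Fin n → ℝ) (hx : ∀ r, 0 ≤ (L *ᵥ x) r) :
    ∀ r, 0 ≤ x r := by
  obtain ⟨hd, ho, hs⟩ := hL
  intro r0
  by_contra hneg
  push Not at hneg
  obtain ⟨p, -, hp⟩ := Finset.exists_min_image Finset.univ x ⟨r0, Finset.mem_univ _⟩
  have hm : x p < 0 := lt_of_le_of_lt (hp r0 (Finset.mem_univ _)) hneg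
  have hrow : ∀ r, 0 ≤ ∑ s, L r s := by
    intro r
    rw [← Finset.add_sum_erase _ _ (Finset.mem_univ r)]
    have h2 : ∑ s ∈ Finset.univ.erase r, |L r s| = - ∑ s ∈ Finset.univ.erase r, L r s := by
      rw [← Finset.sum_neg_distrib]
      refine Finset.sum_congr rfl fun s hs' => ?_
      exact abs_of_nonpos (ho r s (Finset.ne_of_mem_erase hs').symm)
    have := hs r
    linarith
  have key : ∀ r, x r = x p → (∑ s, L r s = 0) ∧ ∀ s, L r s * (x s - x p) = 0 := by
    intro r hr
    have h1 : ∀ s ∈ Finset.univ, L r s * (x s - x p) ≤ 0 := by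
      intro s _
      by_cases hrs : r = s
      · subst hrs; simp [hr]
      · exact mul_nonpos_of_nonpos_of_nonneg (ho r s hrs)
          (sub_nonneg.2 (hp s (Finset.mem_univ _)))
    have h2 : (L *ᵥ x) r = ∑ s, L r s * (x s - x p) + (∑ s, L r s) * x p := by
      rw [Finset.sum_mul, ← Finset.sum_add_distrib]
      simp only [Matrix.mulVec, dotProduct]
      refine Finset.sum_congr rfl fun s _ => by ring
    have h3 := hx r
    have h4 := Finset.sum_nonpos h1
    have h5 := mul_nonpos_of_nonneg_of_nonpos (hrow r) hm.le
    have h6 : (∑ s, L r s) * x p = 0 := by linarith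
    have h7 : ∑ s, L r s * (x s - x p) = 0 := by linarith
    refine ⟨(mul_eq_zero.1 h6).resolve_right hm.ne, fun s => ?_⟩
    exact (Finset.sum_eq_zero_iff_of_nonpos h1).1 h7 s (Finset.mem_univ _)
  have hv : L *ᵥ (fun s => if x s = x p then (1 : ℝ) else 0) = 0 := by
    funext r
    simp only [Matrix.mulVec, dotProduct, Pi.zero_apply]
    by_cases hr : x r = x p
    · rw [← (key r hr).1]
      refine Finset.sum_congr rfl fun s _ => ?_
      by_cases h : x s = x p
      · simp [h]
      · have := (mul_eq_zero.1 ((key r hr).2 s)).resolve_right (sub_ne_zero.2 h)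
        simp [this]
    · refine Finset.sum_eq_zero fun s _ => ?_
      by_cases h : x s = x p
      · have := (mul_eq_zero.1 ((key s h).2 r)).resolve_right (sub_ne_zero.2 hr)
        rw [← hSym.apply r s, this, zero_mul]
      · simp [h]
  have h0 := Matrix.mulVec_injective_of_isUnit hInv (hv.trans (Matrix.mulVec_zero L).symm)
  have := congrFun h0 p
  simp at this

/-- For an invertible SDDM matrix `L` (symmetric invertible RDDL) with integer entries in
`[-U, U]` and neighbouring indices `i ≠ j` (i.e. `L i j ≠ 0`), the columns of the inverse
satisfy `L⁻¹ e⁽ⁱ⁾ ≤ n·U · L⁻¹ e⁽ʲ⁾` entrywise. -/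
theorem inverse_columns_of_neighbors {n : ℕ} (U : ℕ) (hU : 1 ≤ U)
    (L : Matrix (Fin n) (Fin n) ℝ) (hL : IsRDDL L) (hSym : L.IsSymm) (hInv : IsUnit L)
    (hint : ∀ i j, ∃ z : ℤ, L i j = (z : ℝ) ∧ |z| ≤ (U : ℤ))
    (i j : Fin n) (hij : i ≠ j) (hLij : L i j ≠ 0) :
    ∀ k, L⁻¹ k i ≤ (n : ℝ) * U * L⁻¹ k j := by
  intro k
  have hdet : IsUnit L.det := (Matrix.isUnit_iff_isUnit_det L).1 hInv
  have hXs : ∀ a, L⁻¹ k a = L⁻¹ a k := by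
    intro a
    have h : (L⁻¹)ᵀ = L⁻¹ := by rw [Matrix.transpose_nonsing_inv, hSym.eq]
    exact (congrFun (congrFun h a) k)
  have hLx : ∀ r, (L *ᵥ (fun s => L⁻¹ s k)) r = (1 : Matrix (Fin n) (Fin n) ℝ) r k := by
    intro r
    rw [← Matrix.mul_nonsing_inv L hdet]
    rfl
  have h1nn : ∀ r, 0 ≤ (1 : Matrix (Fin n) (Fin n) ℝ) r k := by
    intro r
    rw [Matrix.one_apply]
    split_ifs <;> norm_num
  have hnn : ∀ r, 0 ≤ L⁻¹ r k :=
    rddl_inv_nonneg_s10 L hL hSym hInv (fun s => L⁻¹ s k) (fun r => by rw [hLx]; exact h1nn r)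
  obtain ⟨hd, ho, hs⟩ := hL
  rw [hXs i, hXs j]
  have hj := hLx j
  have hj0 := h1nn j
  simp only [Matrix.mulVec, dotProduct] at hj
  rw [← Finset.add_sum_erase _ _ (Finset.mem_univ j),
    ← Finset.add_sum_erase _ _ (Finset.mem_erase.2 ⟨hij, Finset.mem_univ i⟩)] at hj
  have hrest : ∑ s ∈ (Finset.univ.erase j).erase i, L j s * L⁻¹ s k ≤ 0 := by
    refine Finset.sum_nonpos fun s hs' => ?_
    have : s ≠ j := Finset.ne_of_mem_erase (Finset.mem_of_mem_erase hs')
    exact mul_nonpos_of_nonpos_of_nonneg (ho j s this.symm) (hnn s)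
  have hji : L j i ≤ -1 := by
    have hlt : L j i < 0 := by
      refine lt_of_le_of_ne (ho j i hij.symm) ?_
      rw [hSym.apply i j]; exact hLij
    obtain ⟨z, hz, -⟩ := hint j i
    rw [hz] at hlt ⊢
    have : z < 0 := by exact_mod_cast hlt
    have : z ≤ -1 := by omega
    exact_mod_cast this
  have hjj : L j j ≤ U := by
    obtain ⟨z, hz, hzU⟩ := hint j j
    rw [hz]
    exact_mod_cast (le_abs_self z).trans hzU
  have hn : (1 : ℝ) ≤ n := by
    have : 1 ≤ n := by have := i.2; omega
    exact_mod_cast this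
  have e1 : L j i * L⁻¹ i k ≤ -1 * L⁻¹ i k := mul_le_mul_of_nonneg_right hji (hnn i)
  have e2 : L j j * L⁻¹ j k ≤ U * L⁻¹ j k := mul_le_mul_of_nonneg_right hjj (hnn j)
  have e3 : 1 * ((U : ℝ) * L⁻¹ j k) ≤ n * (U * L⁻¹ j k) :=
    mul_le_mul_of_nonneg_right hn (mul_nonneg (Nat.cast_nonneg _) (hnn j))
  rw [mul_assoc]
  linarith
end

section
/- Let L be an n×n invertible SDDM matrix with integer entries in [−U, U] for some integer U ≥ 1, let b ∈ ℝ^n be a nonnegative vector, and let i, j ∈ [n] with i ≠ j and L_{ij} ≠ 0. Then (nU)^{-1}·(L^{-1}b)_j ≤ (L^{-1}b)_i ≤ nU·(L^{-1}b)_j. -/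
open Matrix

theorem sddm_nonneg {n : ℕ}
    (L : Matrix (Fin n) (Fin n) ℝ) (hL : IsRDDL L) (hSym : L.IsSymm) (hInv : IsUnit L)
    (x : Fin n → ℝ) (hx : ∀ i, 0 ≤ (L *ᵥ x) i) (i : Fin n) : 0 ≤ x i := by
  obtain ⟨hd, ho, hr⟩ := hL
  have : Nonempty (Fin n) := ⟨i⟩
  obtain ⟨p, hp⟩ := Finite.exists_min x
  by_contra hneg
  have hm : x p < 0 := lt_of_le_of_lt (hp i) (not_le.mp hneg)
  have hrow : ∀ q, 0 ≤ ∑ k, L q k := by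
    intro q
    rw [← Finset.add_sum_erase _ _ (Finset.mem_univ q)]
    have h1 : ∑ k ∈ Finset.univ.erase q, L q k = - ∑ k ∈ Finset.univ.erase q, |L q k| := by
      rw [← Finset.sum_neg_distrib]
      refine Finset.sum_congr rfl fun k hk => ?_
      rw [abs_of_nonpos (ho q k (Finset.ne_of_mem_erase hk).symm), neg_neg]
    have := hr q
    linarith
  have key : ∀ q, x q = x p → (∑ k, L q k = 0) ∧ ∀ k, x k ≠ x p → L q k = 0 := by
    intro q hq
    have hle : ∀ k ∈ Finset.univ, L q k * (x k - x p) ≤ 0 := by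
      intro k _
      by_cases hk : q = k
      · subst hk; simp [hq]
      · exact mul_nonpos_of_nonpos_of_nonneg (ho q k hk) (sub_nonneg.mpr (hp k))
    have hsum : (L *ᵥ x) q = ∑ k, L q k * (x k - x p) + (∑ k, L q k) * x p := by
      simp only [Matrix.mulVec, dotProduct]
      rw [Finset.sum_mul, ← Finset.sum_add_distrib]
      refine Finset.sum_congr rfl fun k _ => by ring
    have h0 := hx q
    have h1 := Finset.sum_nonpos hle
    have h2 : (∑ k, L q k) * x p ≤ 0 := mul_nonpos_of_nonneg_of_nonpos (hrow q) hm.le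
    constructor
    · have h3 : (∑ k, L q k) * x p = 0 := by linarith
      exact (mul_eq_zero.mp h3).resolve_right hm.ne
    · intro k hk
      have h3 : ∑ k, L q k * (x k - x p) = 0 := by linarith
      have h4 := (Finset.sum_eq_zero_iff_of_nonpos hle).mp h3 k (Finset.mem_univ k)
      exact (mul_eq_zero.mp h4).resolve_right (sub_ne_zero.mpr hk)
  have hv : L *ᵥ (fun k => if x k = x p then (1 : ℝ) else 0) = L *ᵥ 0 := by
    rw [Matrix.mulVec_zero]
    funext q
    simp only [Matrix.mulVec, dotProduct, Pi.zero_apply]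
    by_cases hq : x q = x p
    · rw [← (key q hq).1]
      refine Finset.sum_congr rfl fun k _ => ?_
      by_cases hk : x k = x p
      · simp [hk]
      · simp [hk, (key q hq).2 k hk]
    · refine Finset.sum_eq_zero fun k _ => ?_
      by_cases hk : x k = x p
      · rw [← hSym.apply q k, (key k hk).2 q hq, zero_mul]
      · simp [hk]
  have h := congrFun (Matrix.mulVec_injective_of_isUnit hInv hv) p
  simp at h

theorem sddm_step {n : ℕ} (U : ℕ)
    (L : Matrix (Fin n) (Fin n) ℝ) (hL : IsRDDL L)
    (hint : ∀ i j, ∃ z : ℤ, L i j = (z : ℝ) ∧ |z| ≤ (U : ℤ))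
    (x : Fin n → ℝ) (hx : ∀ i, 0 ≤ x i) (hLx : ∀ i, 0 ≤ (L *ᵥ x) i)
    (i j : Fin n) (hij : i ≠ j) (hLij : L i j ≠ 0) : x j ≤ (n : ℝ) * U * x i := by
  obtain ⟨hd, ho, hr⟩ := hL
  have h1 : L i j ≤ -1 := by
    obtain ⟨z, hz, -⟩ := hint i j
    have h := lt_of_le_of_ne (ho i j hij) hLij
    rw [hz] at h ⊢
    have h' : z < 0 := by exact_mod_cast h
    have : z ≤ -1 := by omega
    exact_mod_cast this
  have h2 : L i i ≤ U := by
    obtain ⟨z, hz, hzU⟩ := hint i i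
    rw [hz]
    exact_mod_cast (le_abs_self z).trans hzU
  have h3 : (L *ᵥ x) i ≤ L i i * x i + L i j * x j := by
    simp only [Matrix.mulVec, dotProduct]
    rw [← Finset.add_sum_erase _ _ (Finset.mem_univ i),
      ← Finset.add_sum_erase _ _ (Finset.mem_erase.mpr ⟨hij.symm, Finset.mem_univ j⟩)]
    have : ∑ k ∈ (Finset.univ.erase i).erase j, L i k * x k ≤ 0 := by
      refine Finset.sum_nonpos fun k hk => ?_
      have hk' := Finset.ne_of_mem_erase (Finset.mem_of_mem_erase hk)
      exact mul_nonpos_of_nonpos_of_nonneg (ho i k hk'.symm) (hx k)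
    linarith
  have h4 := hLx i
  have h5 : L i j * x j ≤ -1 * x j := mul_le_mul_of_nonneg_right h1 (hx j)
  have h6 : L i i * x i ≤ U * x i := mul_le_mul_of_nonneg_right h2 (hx i)
  have hn : (1 : ℝ) ≤ n := by exact_mod_cast (Nat.succ_le_of_lt i.pos)
  have h7 : 1 * (U * x i) ≤ n * (U * x i) :=
    mul_le_mul_of_nonneg_right hn (mul_nonneg (Nat.cast_nonneg U) (hx i))
  rw [mul_assoc]
  linarith

/-- For an invertible SDDM matrix `L` with integer entries in `[-U, U]`, a nonnegative
vector `b`, and neighbouring indices `i ≠ j` (i.e. `L i j ≠ 0`), the entries of the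
solution `L⁻¹ b` at `i` and `j` are within a factor `n·U` of each other. -/
theorem solution_of_neighbors_single_system {n : ℕ} (U : ℕ) (hU : 1 ≤ U)
    (L : Matrix (Fin n) (Fin n) ℝ) (hL : IsRDDL L) (hSym : L.IsSymm) (hInv : IsUnit L)
    (hint : ∀ i j, ∃ z : ℤ, L i j = (z : ℝ) ∧ |z| ≤ (U : ℤ))
    (b : Fin n → ℝ) (hb : ∀ i, 0 ≤ b i)
    (i j : Fin n) (hij : i ≠ j) (hLij : L i j ≠ 0) :
    ((n : ℝ) * U)⁻¹ * (L⁻¹ *ᵥ b) j ≤ (L⁻¹ *ᵥ b) i ∧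
      (L⁻¹ *ᵥ b) i ≤ (n : ℝ) * U * (L⁻¹ *ᵥ b) j := by
  have hdet := (Matrix.isUnit_iff_isUnit_det L).mp hInv
  have hLx : ∀ k, 0 ≤ (L *ᵥ (L⁻¹ *ᵥ b)) k := by
    intro k
    rw [Matrix.mulVec_mulVec, Matrix.mul_nonsing_inv L hdet, Matrix.one_mulVec]
    exact hb k
  have hx := sddm_nonneg L hL hSym hInv _ hLx
  have hn : (0 : ℝ) < n := by exact_mod_cast i.pos
  have hU' : (0 : ℝ) < U := by exact_mod_cast hU
  constructor
  · rw [inv_mul_le_iff₀ (mul_pos hn hU')]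
    exact sddm_step U L hL hint _ hx hLx i j hij hLij
  · exact sddm_step U L hL hint _ hx hLx j i hij.symm (by rwa [hSym.apply])
end

section
/- Let M, N ∈ ℝ^{n×n} be invertible RDDL matrices and ε ≥ 0. Assume that M and N are entrywise e^ε-approximations of each other in magnitude, i.e., M_{ii} ≈_ε N_{ii} for all i and (−M_{ij}) ≈_ε (−N_{ij}) for all i ≠ j, and assume additionally that the (nonnegative) row sums approximate each other: ∑_{j=1}^n M_{ij} ≈_ε ∑_{j=1}^n N_{ij} for every i. Then the (entrywise nonnegative) inverses satisfy (M^{-1})_{ij} ≈_{2εn} (N^{-1})_{ij} for all i, j. -/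
open Matrix

section Helpers
variable {n : ℕ}

/-- Rows admissible at index `k`: nonpositive off the diagonal, nonnegative sum. -/
def WRow (k : Fin n) (v : Fin n → ℝ) : Prop := (∀ j, k ≠ j → v j ≤ 0) ∧ 0 ≤ ∑ j, v j

/-- Strictly dominant version. -/
def SRow (k : Fin n) (v : Fin n → ℝ) : Prop := (∀ j, k ≠ j → v j ≤ 0) ∧ 0 < ∑ j, v j

theorem s_det_ne (M : Matrix (Fin n) (Fin n) ℝ) (h : ∀ k, SRow k (M k)) : M.det ≠ 0 := by
  apply det_ne_zero_of_sum_row_lt_diag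
  intro k
  obtain ⟨h1, h2⟩ := h k
  rw [← Finset.add_sum_erase _ _ (Finset.mem_univ k)] at h2
  have h3 : ∑ j ∈ Finset.univ.erase k, ‖M k j‖ = - ∑ j ∈ Finset.univ.erase k, M k j := by
    rw [← Finset.sum_neg_distrib]
    apply Finset.sum_congr rfl
    intro j hj
    rw [Real.norm_eq_abs, abs_of_nonpos (h1 j (Finset.ne_of_mem_erase hj).symm)]
  rw [h3]
  have := Real.le_norm_self (M k k)
  linarith

theorem sum_one_row (k : Fin n) : ∑ j, (1 : Matrix (Fin n) (Fin n) ℝ) k j = 1 := by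
  simp [Matrix.one_apply]

theorem s_det_pos (M : Matrix (Fin n) (Fin n) ℝ) (h : ∀ k, SRow k (M k)) : 0 < M.det := by
  by_contra hneg
  push Not at hneg
  let f : ℝ → ℝ := fun t => ((1 - t) • (1 : Matrix (Fin n) (Fin n) ℝ) + t • M).det
  have hf : Continuous f := by
    apply Continuous.matrix_det
    fun_prop
  have h0 : f 0 = 1 := by simp [f]
  have h1 : f 1 = M.det := by simp [f]
  have hiv := intermediate_value_Icc' (zero_le_one : (0:ℝ) ≤ 1) hf.continuousOn
  obtain ⟨t, ⟨ht0, ht1⟩, ht⟩ := hiv (show (0:ℝ) ∈ Set.Icc (f 1) (f 0) by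
    rw [h0, h1]; exact ⟨hneg, zero_le_one⟩)
  refine s_det_ne _ ?_ ht
  intro k
  constructor
  · intro j hj
    have := (h k).1 j hj
    simp only [Matrix.add_apply, Matrix.smul_apply, Matrix.one_apply_ne hj, smul_eq_mul]
    nlinarith
  · have := (h k).2
    simp only [Matrix.add_apply, Matrix.smul_apply, smul_eq_mul, Finset.sum_add_distrib,
      ← Finset.mul_sum, sum_one_row]
    rcases eq_or_lt_of_le ht0 with h | h
    · subst h; simp
    · have := mul_pos h this
      linarith

theorem s_adj_nonneg (M : Matrix (Fin n) (Fin n) ℝ) (h : ∀ k, SRow k (M k)) (i j : Fin n) :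
    0 ≤ M.adjugate i j := by
  have : Nonempty (Fin n) := ⟨i⟩
  obtain ⟨m, hm⟩ := Finite.exists_min (fun k => M.adjugate k j)
  by_contra hneg
  push Not at hneg
  have hmneg : M.adjugate m j < 0 := lt_of_le_of_lt (hm i) hneg
  have he : (M * M.adjugate) m j = (M.det • (1 : Matrix (Fin n) (Fin n) ℝ)) m j := by
    rw [Matrix.mul_adjugate]
  have hge : 0 ≤ (M * M.adjugate) m j := by
    rw [he, Matrix.smul_apply, Matrix.one_apply, smul_eq_mul]
    have := s_det_pos M h
    split_ifs <;> simp [this.le]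
  have hle : (M * M.adjugate) m j ≤ (∑ k, M m k) * M.adjugate m j := by
    rw [Matrix.mul_apply, Finset.sum_mul]
    apply Finset.sum_le_sum
    intro k _
    by_cases hk : m = k
    · subst hk; exact le_rfl
    · exact mul_le_mul_of_nonpos_left (hm k) ((h m).1 k hk)
  have := mul_neg_of_pos_of_neg (h m).2 hmneg
  linarith

theorem s_of_w (M : Matrix (Fin n) (Fin n) ℝ) (h : ∀ k, WRow k (M k)) (t : ℝ) (ht : 0 < t) :
    ∀ k, SRow k ((M + t • (1 : Matrix (Fin n) (Fin n) ℝ)) k) := by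
  intro k
  constructor
  · intro j hj
    have := (h k).1 j hj
    simpa [Matrix.one_apply_ne hj] using this
  · have := (h k).2
    simp only [Matrix.add_apply, Matrix.smul_apply, smul_eq_mul, Finset.sum_add_distrib,
      ← Finset.mul_sum, sum_one_row]
    linarith

theorem lim_nonneg (f : ℝ → ℝ) (hf : Continuous f) (h : ∀ t, 0 < t → 0 ≤ f t) : 0 ≤ f 0 := by
  have h1 : Filter.Tendsto f (nhdsWithin 0 (Set.Ioi 0)) (nhds (f 0)) :=
    hf.continuousAt.tendsto.mono_left nhdsWithin_le_nhds
  refine ge_of_tendsto h1 ?_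
  filter_upwards [self_mem_nhdsWithin] with t ht using h t ht

theorem w_det_nonneg (M : Matrix (Fin n) (Fin n) ℝ) (h : ∀ k, WRow k (M k)) : 0 ≤ M.det := by
  have := lim_nonneg (fun t => (M + t • (1 : Matrix (Fin n) (Fin n) ℝ)).det)
    (by apply Continuous.matrix_det; fun_prop)
    (fun t ht => (s_det_pos _ (s_of_w M h t ht)).le)
  simpa using this

theorem w_adj_nonneg (M : Matrix (Fin n) (Fin n) ℝ) (h : ∀ k, WRow k (M k)) (i j : Fin n) :
    0 ≤ M.adjugate i j := by
  have := lim_nonneg (fun t => (M + t • (1 : Matrix (Fin n) (Fin n) ℝ)).adjugate i j)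
    (by
      apply Continuous.matrix_elem
      apply Continuous.matrix_adjugate; fun_prop)
    (fun t ht => s_adj_nonneg _ (s_of_w M h t ht) i j)
  simpa using this

theorem w_update (M : Matrix (Fin n) (Fin n) ℝ) (h : ∀ k, WRow k (M k)) (k : Fin n)
    (v : Fin n → ℝ) (hv : WRow k v) : ∀ l, WRow l (M.updateRow k v l) := by
  intro l
  by_cases hl : l = k
  · subst hl; rw [Matrix.updateRow_self]; exact hv
  · rw [Matrix.updateRow_ne hl]; exact h l

theorem det_lin (M : Matrix (Fin n) (Fin n) ℝ) (k : Fin n) (c : ℝ) (v w : Fin n → ℝ) :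
    (M.updateRow k (c • w - v)).det = c * (M.updateRow k w).det - (M.updateRow k v).det := by
  rw [show c • w - v = c • w + (-1 : ℝ) • v by simp [sub_eq_add_neg], Matrix.det_updateRow_add,
    Matrix.det_updateRow_smul, Matrix.det_updateRow_smul]
  ring

theorem hybrid (F : Matrix (Fin n) (Fin n) ℝ → ℝ) (c : ℝ) (hc : 1 ≤ c)
    (hF : ∀ M : Matrix (Fin n) (Fin n) ℝ, (∀ k, WRow k (M k)) → ∀ k v w,
      WRow k v → WRow k w → WRow k (c • w - v) →
      F (M.updateRow k v) ≤ c * F (M.updateRow k w))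
    (M N : Matrix (Fin n) (Fin n) ℝ) (hM : ∀ k, WRow k (M k)) (hN : ∀ k, WRow k (N k))
    (hMN : ∀ k, WRow k (c • M k - N k)) : F N ≤ c ^ n * F M := by
  have key : ∀ S : Finset (Fin n),
      F (Matrix.of fun k => if k ∈ S then N k else M k) ≤ c ^ S.card * F M := by
    intro S
    induction S using Finset.induction_on with
    | empty =>
      have : (Matrix.of fun k => if k ∈ (∅ : Finset (Fin n)) then N k else M k) = M := by
        ext a b; simp
      rw [this]; simp
    | insert k S hk ih =>
      set H : Matrix (Fin n) (Fin n) ℝ := Matrix.of fun k => if k ∈ S then N k else M k with hH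
      have e1 : (Matrix.of fun l => if l ∈ insert k S then N l else M l) = H.updateRow k (N k) := by
        ext a b
        by_cases ha : a = k
        · subst ha; simp
        · rw [Matrix.updateRow_ne ha]; simp [hH, ha]
      have e2 : H = H.updateRow k (M k) := by
        ext a b
        by_cases ha : a = k
        · subst ha; simp [hH, hk]
        · rw [Matrix.updateRow_ne ha]
      have hW : ∀ l, WRow l (H l) := by
        intro l
        by_cases hl : l ∈ S
        · have : H l = N l := by ext b; simp [hH, hl]
          rw [this]; exact hN l
        · have : H l = M l := by ext b; simp [hH, hl]
          rw [this]; exact hM l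
      have h3 := hF H hW k (N k) (M k) (hN k) (hM k) (hMN k)
      rw [← e2] at h3
      rw [e1, Finset.card_insert_of_notMem hk, pow_succ']
      calc _ ≤ c * F H := h3
        _ ≤ c * (c ^ S.card * F M) := mul_le_mul_of_nonneg_left ih (by linarith)
        _ = _ := by ring
  have := key Finset.univ
  have e : (Matrix.of fun k => if k ∈ (Finset.univ : Finset (Fin n)) then N k else M k) = N := by
    ext a b; simp
  rw [e] at this
  simpa using this

theorem det_bound (c : ℝ) (hc : 1 ≤ c)
    (M N : Matrix (Fin n) (Fin n) ℝ) (hM : ∀ k, WRow k (M k)) (hN : ∀ k, WRow k (N k))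
    (hMN : ∀ k, WRow k (c • M k - N k)) : N.det ≤ c ^ n * M.det := by
  refine hybrid (fun A => A.det) c hc ?_ M N hM hN hMN
  intro A hA k v w _ _ hd
  have := w_det_nonneg _ (w_update A hA k _ hd)
  rw [det_lin] at this
  simpa using this

theorem adj_bound (c : ℝ) (hc : 1 ≤ c)
    (M N : Matrix (Fin n) (Fin n) ℝ) (hM : ∀ k, WRow k (M k)) (hN : ∀ k, WRow k (N k))
    (hMN : ∀ k, WRow k (c • M k - N k)) (i j : Fin n) :
    N.adjugate i j ≤ c ^ n * M.adjugate i j := by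
  refine hybrid (fun A => A.adjugate i j) c hc ?_ M N hM hN hMN
  intro A hA k v w _ hw hd
  show (A.updateRow k v).adjugate i j ≤ c * (A.updateRow k w).adjugate i j
  by_cases hk : k = j
  · subst hk
    have h0 := w_adj_nonneg _ (w_update A hA k _ hw) i k
    have e : (A.updateRow k v).adjugate i k = (A.updateRow k w).adjugate i k := by
      simp [Matrix.adjugate_apply]
    rw [e]
    nlinarith
  · have := w_adj_nonneg _ (w_update A hA k _ hd) i j
    have comm : ∀ u, (A.updateRow k u).adjugate i j =
        ((A.updateRow j (Pi.single i 1)).updateRow k u).det := by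
      intro u
      rw [Matrix.adjugate_apply]
      congr 1
      ext a b
      by_cases ha : a = k
      · subst ha; simp [Matrix.updateRow_ne hk]
      · by_cases hj : a = j
        · subst hj; simp [Matrix.updateRow_ne ha]
        · simp [Matrix.updateRow_ne ha, Matrix.updateRow_ne hj]
    rw [comm, det_lin] at this
    rw [comm, comm]
    linarith

theorem inv_bound (c : ℝ) (hc : 1 ≤ c)
    (M N : Matrix (Fin n) (Fin n) ℝ) (hM : ∀ k, WRow k (M k)) (hN : ∀ k, WRow k (N k))
    (hMN : ∀ k, WRow k (c • M k - N k)) (hNM : ∀ k, WRow k (c • N k - M k))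
    (uM : IsUnit M) (uN : IsUnit N) (i j : Fin n) :
    N⁻¹ i j ≤ (c ^ n * c ^ n) * M⁻¹ i j := by
  have dM : 0 < M.det := lt_of_le_of_ne (w_det_nonneg M hM)
    ((Matrix.isUnit_iff_isUnit_det M).1 uM).ne_zero.symm
  have dN : 0 < N.det := lt_of_le_of_ne (w_det_nonneg N hN)
    ((Matrix.isUnit_iff_isUnit_det N).1 uN).ne_zero.symm
  have h1 := adj_bound c hc M N hM hN hMN i j
  have h2 := det_bound c hc N M hN hM hNM
  have h3 := w_adj_nonneg M hM i j
  have hp : 0 < c ^ n := by positivity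
  rw [Matrix.inv_def, Matrix.inv_def, Matrix.smul_apply, Matrix.smul_apply,
    Ring.inverse_eq_inv', smul_eq_mul, smul_eq_mul,
    inv_mul_eq_div, inv_mul_eq_div, ← mul_div_assoc, div_le_div_iff₀ dN dM]
  calc N.adjugate i j * M.det ≤ (c ^ n * M.adjugate i j) * (c ^ n * N.det) :=
        mul_le_mul h1 h2 dM.le (by positivity)
    _ = _ := by ring

theorem w_of_rddl (M : Matrix (Fin n) (Fin n) ℝ) (h : IsRDDL M) : ∀ k, WRow k (M k) := by
  intro k
  refine ⟨fun j hj => h.2.1 k j hj, ?_⟩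
  have h2 := h.2.2 k
  rw [← Finset.add_sum_erase _ _ (Finset.mem_univ k)]
  have h3 : ∑ j ∈ Finset.univ.erase k, |M k j| = - ∑ j ∈ Finset.univ.erase k, M k j := by
    rw [← Finset.sum_neg_distrib]
    apply Finset.sum_congr rfl
    intro j hj
    rw [abs_of_nonpos (h.2.1 k j (Finset.ne_of_mem_erase hj).symm)]
  linarith

theorem eapprox_flip (ε a b : ℝ) (h : Real.exp (-ε) * a ≤ b) : a ≤ Real.exp ε * b := by
  have := mul_le_mul_of_nonneg_left h (Real.exp_pos ε).le
  rwa [← mul_assoc, ← Real.exp_add, add_neg_cancel, Real.exp_zero, one_mul] at this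

theorem eapprox_flip' (ε a b : ℝ) (h : a ≤ Real.exp ε * b) : Real.exp (-ε) * a ≤ b := by
  have := mul_le_mul_of_nonneg_left h (Real.exp_pos (-ε)).le
  rwa [← mul_assoc, ← Real.exp_add, neg_add_cancel, Real.exp_zero, one_mul] at this

theorem w_diff (c : ℝ) (k : Fin n) (v w : Fin n → ℝ) (h1 : ∀ j, k ≠ j → -(v j) ≤ c * -(w j))
    (h2 : ∑ j, v j ≤ c * ∑ j, w j) : WRow k (c • w - v) := by
  constructor
  · intro j hj
    have := h1 j hj
    simp only [Pi.sub_apply, Pi.smul_apply, smul_eq_mul]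
    linarith
  · simp only [Pi.sub_apply, Pi.smul_apply, smul_eq_mul, Finset.sum_sub_distrib, ← Finset.mul_sum]
    linarith

end Helpers

/-- If two invertible RDDL matrices entrywise `e^ε`-approximate each other in magnitude
and their row sums `e^ε`-approximate each other, then their inverses entrywise
`e^{2εn}`-approximate each other. -/
theorem approx_invert {n : ℕ} (ε : ℝ) (hε : 0 ≤ ε)
    (M N : Matrix (Fin n) (Fin n) ℝ)
    (hM : IsRDDL M) (hN : IsRDDL N) (hMinv : IsUnit M) (hNinv : IsUnit N)
    (hdiag : ∀ i, EApprox ε (M i i) (N i i))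
    (hoff : ∀ i j, i ≠ j → EApprox ε (-(M i j)) (-(N i j)))
    (hrow : ∀ i, EApprox ε (∑ j, M i j) (∑ j, N i j)) :
    ∀ i j, EApprox (2 * ε * n) (M⁻¹ i j) (N⁻¹ i j) := by
  intro i j
  have hc : 1 ≤ Real.exp ε := Real.one_le_exp hε
  have wM := w_of_rddl M hM
  have wN := w_of_rddl N hN
  have hMN : ∀ k, WRow k (Real.exp ε • M k - N k) := fun k =>
    w_diff _ k _ _ (fun j hj => (hoff k j hj).2) (hrow k).2
  have hNM : ∀ k, WRow k (Real.exp ε • N k - M k) := fun k =>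
    w_diff _ k _ _ (fun j hj => eapprox_flip _ _ _ (hoff k j hj).1)
      (eapprox_flip _ _ _ (hrow k).1)
  have he : Real.exp ε ^ n * Real.exp ε ^ n = Real.exp (2 * ε * n) := by
    rw [← Real.exp_nat_mul, ← Real.exp_add]
    congr 1
    ring
  have b1 := inv_bound _ hc M N wM wN hMN hNM hMinv hNinv i j
  have b2 := inv_bound _ hc N M wN wM hNM hMN hNinv hMinv i j
  rw [he] at b1 b2
  exact ⟨eapprox_flip' _ _ _ b2, b1⟩
end

section
/- Let M ∈ ℝ^{n×n} be an invertible RDDL matrix with integer entries in [−U, U] for some integer U ≥ 1, and let i, j ∈ [n]. Suppose there is a sequence i = v₀, v₁, …, v_ℓ = j of indices with M_{v_l, v_{l+1}} ≠ 0 and v_l ≠ v_{l+1} for each 0 ≤ l < ℓ. Then, with A := I − diag(M)^{-1}M, one has ((I − A)^{-1})_{ij} ≥ U^{−ℓ}, and consequently (M^{-1})_{ij} ≥ U^{−(ℓ+1)}. -/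
open Matrix

/-- Monotonicity: if `I - A` is onto, `A ≥ 0` with row sums at most one, then
`x ≥ A x` implies `x ≥ 0`. -/
theorem nonneg_of_super {n : ℕ} (A : Matrix (Fin n) (Fin n) ℝ)
    (h0 : ∀ i j, 0 ≤ A i j) (h1 : ∀ i, ∑ j, A i j ≤ 1)
    (u : Fin n → ℝ) (hu : ∀ i, u i = ∑ j, A i j * u j + 1)
    (x : Fin n → ℝ) (hx : ∀ i, ∑ j, A i j * x j ≤ x i) (i : Fin n) : 0 ≤ x i := by
  by_contra hneg
  push Not at hneg
  obtain ⟨p, -, hp⟩ := Finset.exists_min_image Finset.univ x ⟨i, Finset.mem_univ i⟩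
  have hm : x p < 0 := lt_of_le_of_lt (hp i (Finset.mem_univ i)) hneg
  obtain ⟨k, hkS, hk⟩ := Finset.exists_min_image
    (Finset.univ.filter fun q => x q = x p) u ⟨p, by simp⟩
  have hkp : x k = x p := by simpa using hkS
  have hnn : ∀ j ∈ Finset.univ, 0 ≤ A k j * (x j - x p) := fun j hj =>
    mul_nonneg (h0 k j) (sub_nonneg.2 (hp j hj))
  have hsum : ∑ j, A k j * (x j - x p) = ∑ j, A k j * x j - (∑ j, A k j) * x p := by
    simp only [mul_sub, Finset.sum_sub_distrib, Finset.sum_mul]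
  have hge := Finset.sum_nonneg hnn
  have hxk := hx k
  have hrk := h1 k
  have hr : ∑ j, A k j = 1 := by nlinarith
  have hz : ∑ j, A k j * (x j - x p) = 0 := by
    rw [hr] at hsum
    linarith
  rw [Finset.sum_eq_zero_iff_of_nonneg hnn] at hz
  have hle : ∑ j, A k j * u k ≤ ∑ j, A k j * u j := by
    apply Finset.sum_le_sum
    intro j hj
    rcases mul_eq_zero.1 (hz j hj) with h | h
    · simp [h]
    · exact mul_le_mul_of_nonneg_left (hk j (by simp; linarith)) (h0 k j)
  rw [← Finset.sum_mul, hr] at hle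
  linarith [hu k]

theorem walk_bound {n : ℕ} (U : ℕ) (hU : 1 ≤ U) (A N : Matrix (Fin n) (Fin n) ℝ)
    (P : Fin n → Fin n → Prop) (hN0 : ∀ i j, 0 ≤ N i j) (hN1 : ∀ j, 1 ≤ N j j)
    (hAN : ∀ i k j, i ≠ j → A i k * N k j ≤ N i j)
    (hAN' : ∀ i k, A i k * N k i + 1 ≤ N i i)
    (hP : ∀ i k, P i k → (U : ℝ)⁻¹ ≤ A i k) (j : Fin n) (ℓ : ℕ) :
    ∀ (v : Fin (ℓ + 1) → Fin n), v (Fin.last ℓ) = j →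
      (∀ l : Fin ℓ, P (v l.castSucc) (v l.succ)) → ((U : ℝ) ^ ℓ)⁻¹ ≤ N (v 0) j := by
  induction ℓ with
  | zero =>
    intro v hv _
    have : v 0 = j := hv
    simpa [this] using hN1 j
  | succ ℓ ih =>
    intro v hv hs
    have h := ih (fun l => v l.succ) (by simpa using hv) (fun l => by
      have := hs l.succ
      simpa using this)
    have h2 := hP _ _ (hs 0)
    simp only [Fin.castSucc_zero] at h2
    have h3 : ((U : ℝ) ^ (ℓ + 1))⁻¹ ≤ A (v 0) (v (Fin.succ 0)) * N (v (Fin.succ 0)) j := by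
      rw [pow_succ', mul_inv]
      have hU0 : (0 : ℝ) ≤ (U : ℝ)⁻¹ := by positivity
      exact mul_le_mul h2 h (by positivity) (hU0.trans h2)
    by_cases hj : v 0 = j
    · subst hj
      linarith [hAN' (v 0) (v (Fin.succ 0))]
    · exact h3.trans (hAN _ _ _ hj)

/-- If there is a length-`ℓ` walk from `i` to `j` along nonzero off-diagonal entries of
an invertible RDDL matrix `M` with integer entries in `[-U, U]`, then, with
`A = I - diag(M)⁻¹·M`, one has `((I-A)⁻¹)ᵢⱼ ≥ U^{-ℓ}` and `(M⁻¹)ᵢⱼ ≥ U^{-(ℓ+1)}`. -/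
theorem inverse_entry_lower_bound_of_walk {n : ℕ} (U : ℕ) (hU : 1 ≤ U)
    (M : Matrix (Fin n) (Fin n) ℝ) (hM : IsRDDL M) (hInv : IsUnit M)
    (hint : ∀ i j, ∃ z : ℤ, M i j = (z : ℝ) ∧ |z| ≤ (U : ℤ))
    (i j : Fin n) (ℓ : ℕ) (v : Fin (ℓ + 1) → Fin n)
    (hv0 : v 0 = i) (hvlast : v (Fin.last ℓ) = j)
    (hstep : ∀ l : Fin ℓ, M (v l.castSucc) (v l.succ) ≠ 0 ∧ v l.castSucc ≠ v l.succ)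
    (A : Matrix (Fin n) (Fin n) ℝ)
    (hA : A = 1 - (Matrix.diagonal fun k => (M k k)⁻¹) * M) :
    ((U : ℝ) ^ ℓ)⁻¹ ≤ (1 - A)⁻¹ i j ∧ ((U : ℝ) ^ (ℓ + 1))⁻¹ ≤ M⁻¹ i j := by
  obtain ⟨hd, ho, hs⟩ := hM
  have hB : 1 - A = (Matrix.diagonal fun k => (M k k)⁻¹) * M := by rw [hA]; abel
  have hDD : (Matrix.diagonal fun k => (M k k)⁻¹) * (Matrix.diagonal fun k => M k k) = 1 := by
    rw [Matrix.diagonal_mul_diagonal, ← Matrix.diagonal_one]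
    congr 1
    funext k
    exact inv_mul_cancel₀ (hd k).ne'
  have hDu : IsUnit (Matrix.diagonal fun k => (M k k)⁻¹) :=
    (Matrix.isUnit_iff_isUnit_det _).2 (Matrix.isUnit_det_of_right_inverse hDD)
  have hBu : IsUnit (1 - A) := by rw [hB]; exact hDu.mul hInv
  have hBd := (Matrix.isUnit_iff_isUnit_det _).1 hBu
  have hAe : ∀ i j, A i j = (if i = j then 1 else 0) - (M i i)⁻¹ * M i j := by
    intro i j
    rw [hA, Matrix.sub_apply, Matrix.diagonal_mul, Matrix.one_apply]
  have hAd : ∀ i, A i i = 0 := by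
    intro i
    rw [hAe, if_pos rfl, inv_mul_cancel₀ (hd i).ne', sub_self]
  have hAo : ∀ i j, i ≠ j → A i j = (M i i)⁻¹ * |M i j| := by
    intro i j h
    rw [hAe, if_neg h, abs_of_nonpos (ho i j h)]; ring
  have h0 : ∀ i j, 0 ≤ A i j := by
    intro i j
    by_cases h : i = j
    · subst h; rw [hAd]
    · rw [hAo i j h]
      exact mul_nonneg (inv_nonneg.2 (hd i).le) (abs_nonneg _)
  have h1 : ∀ i, ∑ j, A i j ≤ 1 := by
    intro i
    rw [← Finset.add_sum_erase _ _ (Finset.mem_univ i), hAd, zero_add,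
      Finset.sum_congr rfl (fun j hj => hAo i j (Finset.ne_of_mem_erase hj).symm),
      ← Finset.mul_sum, inv_mul_le_iff₀ (hd i), mul_one]
    exact hs i
  have hMU : ∀ k, M k k ≤ U := by
    intro k
    obtain ⟨z, hz, hzU⟩ := hint k k
    rw [hz]
    exact_mod_cast (le_abs_self z).trans hzU
  have hBN : (1 - A) * (1 - A)⁻¹ = 1 := Matrix.mul_nonsing_inv _ hBd
  have hMN : M⁻¹ = (1 - A)⁻¹ * Matrix.diagonal fun k => (M k k)⁻¹ := by
    apply Matrix.inv_eq_left_inv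
    rw [Matrix.mul_assoc, ← hB]
    exact Matrix.nonsing_inv_mul _ hBd
  rw [hMN, Matrix.mul_diagonal]
  set N := (1 - A)⁻¹ with hN
  have hrec : ∀ i j, N i j = ∑ k, A i k * N k j + (if i = j then 1 else 0) := by
    intro i j
    have h := congrFun (congrFun hBN i) j
    rw [Matrix.sub_mul, Matrix.one_mul, Matrix.sub_apply, Matrix.mul_apply,
      Matrix.one_apply] at h
    linarith
  have hN0 : ∀ i j, 0 ≤ N i j := by
    intro i j
    refine nonneg_of_super A h0 h1 (fun i => ∑ j, N i j) ?_ (fun i => N i j) ?_ i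
    · intro i
      simp only [Finset.mul_sum]
      rw [Finset.sum_comm, Finset.sum_congr rfl (fun j _ => hrec i j), Finset.sum_add_distrib]
      simp
    · intro i
      show _ ≤ N i j
      rw [hrec i j]
      split_ifs <;> linarith
  have hterm : ∀ i k j, A i k * N k j ≤ ∑ k, A i k * N k j := fun i k j =>
    Finset.single_le_sum (f := fun k => A i k * N k j)
      (fun k _ => mul_nonneg (h0 i k) (hN0 k j)) (Finset.mem_univ k)
  have hsn : ∀ i j, 0 ≤ ∑ k, A i k * N k j := fun i j =>
    Finset.sum_nonneg (fun k _ => mul_nonneg (h0 i k) (hN0 k j))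
  have key : ((U : ℝ) ^ ℓ)⁻¹ ≤ N i j := by
    rw [← hv0]
    refine walk_bound U hU A N (fun a b => M a b ≠ 0 ∧ a ≠ b) hN0 ?_ ?_ ?_ ?_ j ℓ v hvlast hstep
    · intro j
      have := hrec j j
      rw [if_pos rfl] at this
      linarith [hsn j j]
    · intro i k j hij
      have := hrec i j
      rw [if_neg hij] at this
      linarith [hterm i k j]
    · intro i k
      have := hrec i i
      rw [if_pos rfl] at this
      linarith [hterm i k i]
    · rintro a b ⟨hab, hne⟩
      rw [hAo a b hne]
      have h1M : (1 : ℝ) ≤ |M a b| := by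
        obtain ⟨z, hz, -⟩ := hint a b
        rw [hz] at hab ⊢
        have hz0 : z ≠ 0 := by exact_mod_cast hab
        exact_mod_cast Int.one_le_abs hz0
      have h2 : (U : ℝ)⁻¹ ≤ (M a a)⁻¹ := inv_anti₀ (hd a) (hMU a)
      have h3 : 0 ≤ (M a a)⁻¹ := inv_nonneg.2 (hd a).le
      nlinarith
  refine ⟨key, ?_⟩
  rw [pow_succ, mul_inv]
  exact mul_le_mul key (inv_anti₀ (hd j) (hMU j)) (by positivity) (hN0 i j)
end
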